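/- arXiv:2105.12565 — 3 statements merged into one kernel-verified Lean document; each statement's English description precedes it below -/
import Mathlib

section
/- If G is a connected graph of order n, then the average size of a nonempty connected vertex set satisfies A(G) ≥ (n+2)/3, with equality if and only if G is a path. -/
open Finset Filter

attribute [local instance] Classical.propDecidable

noncomputable def connSets {V : Type*} [Fintype V] (G : SimpleGraph V) : Finset (Finset V) :=
  Finset.univ.filter fun U => U.Nonempty ∧ (G.induce (U : Set V)).Connected

def KConnected {V : Type*} [Fintype V] (k : ℕ) (G : SimpleGraph V) : Prop :=
  k < Fintype.card V ∧
    ∀ S : Finset V, S.card < k → (G.induce ((Sᶜ : Finset V) : Set V)).Connected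

namespace PathMin

section

variable {V : Type*} {G : SimpleGraph V}

/-- Connected finite vertex sets, described by cuts. -/
def Con (G : SimpleGraph V) (U : Finset V) : Prop :=
  U.Nonempty ∧ ∀ T ⊆ U, T.Nonempty → T ≠ U → ∃ a ∈ T, ∃ b ∈ U, b ∉ T ∧ G.Adj a b

/-- Connected subsets of `W`. -/
noncomputable def cs (G : SimpleGraph V) (W : Finset V) : Finset (Finset V) :=
  W.powerset.filter (fun U => Con G U)

/-- Connected subsets of `W` containing `H`. -/
noncomputable def cx (G : SimpleGraph V) (W H : Finset V) : Finset (Finset V) :=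
  W.powerset.filter (fun U => Con G U ∧ H ⊆ U)

/-- `C` is a component of `W \ v`. -/
def Br (G : SimpleGraph V) (W : Finset V) (v : V) (C : Finset V) : Prop :=
  C ⊆ W ∧ v ∉ C ∧ Con G C ∧ ∀ a ∈ C, ∀ b ∈ W, G.Adj a b → b ∈ C ∨ b = v

theorem mem_cs {W U : Finset V} : U ∈ cs G W ↔ U ⊆ W ∧ Con G U := by
  simp [cs]

theorem mem_cx {W H U : Finset V} : U ∈ cx G W H ↔ U ⊆ W ∧ Con G U ∧ H ⊆ U := by
  simp [cx]

theorem con_single (v : V) : Con G {v} := by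
  refine ⟨by simp, ?_⟩
  intro T hT hne hTU
  exfalso
  apply hTU
  rcases Finset.subset_singleton_iff.1 hT with h | h
  · simp [h] at hne
  · exact h

theorem con_union {U W : Finset V} (hU : Con G U) (hW : Con G W) {z : V} (hzU : z ∈ U)
    (hzW : z ∈ W) : Con G (U ∪ W) := by
  refine ⟨⟨z, by simp [hzU]⟩, ?_⟩
  intro T hT hne hTU
  by_contra hcon
  push Not at hcon
  -- T ∩ U is empty or U
  have key : ∀ X : Finset V, Con G X → X ⊆ U ∪ W → (∃ t ∈ T, t ∈ X) → X ⊆ T := by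
    intro X hX hXs ⟨t, htT, htX⟩
    by_contra hns
    obtain ⟨a, ha, b, hb, hbT, hab⟩ := hX.2 (T ∩ X) (Finset.inter_subset_right)
      ⟨t, by simp [htT, htX]⟩ (fun h => hns (by rw [← h]; exact Finset.inter_subset_left))
    simp only [Finset.mem_inter] at ha hbT
    exact hcon a ha.1 b (hXs hb) (fun h => hbT ⟨h, hb⟩) hab
  have hz : z ∈ T := by
    obtain ⟨t, ht⟩ := hne
    rcases Finset.mem_union.1 (hT ht) with h | h
    · exact key U hU Finset.subset_union_left ⟨t, ht, h⟩ hzU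
    · exact key W hW Finset.subset_union_right ⟨t, ht, h⟩ hzW
  apply hTU
  apply Finset.Subset.antisymm hT
  exact Finset.union_subset (key U hU Finset.subset_union_left ⟨z, hz, hzU⟩)
    (key W hW Finset.subset_union_right ⟨z, hz, hzW⟩)

theorem con_pair {a b : V} (h : G.Adj a b) : Con G {a, b} := by
  refine ⟨by simp, ?_⟩
  intro T hT hne hTU
  by_cases ha : a ∈ T
  · refine ⟨a, ha, b, by simp, ?_, h⟩
    intro hb
    apply hTU
    apply Finset.Subset.antisymm hT
    intro x hx
    simp at hx
    rcases hx with rfl | rfl <;> assumption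
  · obtain ⟨t, ht⟩ := hne
    have := hT ht
    simp at this
    rcases this with rfl | rfl
    · exact absurd ht ha
    · exact ⟨t, ht, a, by simp, ha, h.symm⟩

theorem con_insert {U : Finset V} (hU : Con G U) {a b : V} (ha : a ∈ U) (h : G.Adj a b) :
    Con G (insert b U) := by
  have := con_union hU (con_pair h) ha (by simp)
  convert this using 1
  ext x
  simp
  grind

/-- A connected set that meets a component and avoids the cut vertex lies in the component. -/
theorem br_sub {W C U : Finset V} {v : V} (hB : Br G W v C) (hU : Con G U) (hUW : U ⊆ W)
    (hv : v ∉ U) {z : V} (hzU : z ∈ U) (hzC : z ∈ C) : U ⊆ C := by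
  by_contra hns
  obtain ⟨a, ha, b, hb, hbT, hab⟩ := hU.2 (U ∩ C) (Finset.inter_subset_left)
      ⟨z, by simp [hzU, hzC]⟩ (fun h => hns (by rw [← h]; exact Finset.inter_subset_right))
  simp only [Finset.mem_inter] at ha hbT
  rcases hB.2.2.2 a ha.2 b (hUW hb) hab with h | h
  · exact hbT ⟨hb, h⟩
  · exact hv (h ▸ hb)

theorem br_adj {W C : Finset V} {v : V} (hW : Con G W) (hv : v ∈ W) (hB : Br G W v C) :
    ∃ a ∈ C, G.Adj a v := by
  obtain ⟨a, ha, b, hb, hbT, hab⟩ := hW.2 C hB.1 hB.2.2.1.1 (fun h => hB.2.1 (h ▸ hv))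
  rcases hB.2.2.2 a ha b hb hab with h | h
  · exact absurd h hbT
  · exact ⟨a, ha, h ▸ hab⟩

theorem br_insert {W C : Finset V} {v : V} (hW : Con G W) (hv : v ∈ W) (hB : Br G W v C) :
    Con G (insert v C) := by
  obtain ⟨a, ha, h⟩ := br_adj hW hv hB
  exact con_insert hB.2.2.1 ha h

theorem br_sdiff {W C : Finset V} {v : V} (hW : Con G W) (hv : v ∈ W) (hB : Br G W v C) :
    Con G (W \ C) := by
  refine ⟨⟨v, by simp [hv, hB.2.1]⟩, ?_⟩
  intro T hT hne hTU
  have hTW : ∀ t ∈ T, t ∈ W ∧ t ∉ C := fun t ht => by simpa using hT ht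
  by_cases hvT : v ∈ T
  · obtain ⟨a, ha, b, hb, hbT, hab⟩ := hW.2 (T ∪ C)
      (Finset.union_subset (fun t ht => (hTW t ht).1) hB.1) ⟨v, by simp [hvT]⟩ (by
        intro h
        apply hTU
        rw [← h]
        ext x
        have := hTW x
        simp
        grind)
    simp only [Finset.mem_union, not_or] at ha hbT
    rcases ha with ha | ha
    · exact ⟨a, ha, b, by simp [hb, hbT.2], hbT.1, hab⟩
    · rcases hB.2.2.2 a ha b hb hab with h | h
      · exact absurd h hbT.2
      · exact absurd (h ▸ hvT) hbT.1
  · obtain ⟨a, ha, b, hb, hbT, hab⟩ := hW.2 T (fun t ht => (hTW t ht).1) hne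
      (fun h => hvT (h ▸ hv))
    refine ⟨a, ha, b, ?_, hbT, hab⟩
    simp only [Finset.mem_sdiff]
    refine ⟨hb, fun hbC => ?_⟩
    rcases hB.2.2.2 b hbC a (hTW a ha).1 hab.symm with h | h
    · exact (hTW a ha).2 h
    · exact hvT (h ▸ ha)

/-- Components exist: with a given connected set inside. -/
theorem br_exists {W H : Finset V} {v : V} (hH : Con G H) (hHW : H ⊆ W) (hv : v ∉ H) :
    ∃ C, Br G W v C ∧ H ⊆ C := by
  obtain ⟨C, hC, hmax⟩ := Finset.exists_max_image
    ((W.erase v).powerset.filter (fun U => Con G U ∧ H ⊆ U)) Finset.card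
    ⟨H, by
      simp only [Finset.mem_filter, Finset.mem_powerset]
      exact ⟨fun x hx => Finset.mem_erase.2 ⟨fun h => hv (h ▸ hx), hHW hx⟩, hH, subset_rfl⟩⟩
  simp only [Finset.mem_filter, Finset.mem_powerset] at hC hmax
  refine ⟨C, ⟨fun x hx => Finset.mem_of_mem_erase (hC.1 hx), fun h => by simpa using hC.1 h,
    hC.2.1, ?_⟩, hC.2.2⟩
  intro a ha b hb hab
  by_contra hcon
  push Not at hcon
  have := hmax (insert b C) ⟨?_, con_insert hC.2.1 ha hab, hC.2.2.trans (Finset.subset_insert _ _)⟩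
  · rw [Finset.card_insert_of_notMem hcon.1] at this
    omega
  · intro x hx
    rcases Finset.mem_insert.1 hx with rfl | hx
    · exact Finset.mem_erase.2 ⟨hcon.2, hb⟩
    · exact hC.1 hx

/-- Two connected sets sharing only `v`: product lower bound. -/
theorem cx_prod {W A B H K : Finset V} {v : V} (hA : A ⊆ W) (hB : B ⊆ W)
    (hAB : A ∩ B = {v}) (hvH : v ∈ H) (hK : K ⊆ H) :
    (cx G A {v}).card * (cx G B H).card ≤ (cx G W K).card := by
  rw [← Finset.card_product]
  have hAB' : ∀ x, x ∈ A → x ∈ B → x = v := fun x h1 h2 => by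
    have : x ∈ A ∩ B := by simp [h1, h2]
    rw [hAB] at this; simpa using this
  apply Finset.card_le_card_of_injOn (fun p => p.1 ∪ p.2)
  · rintro ⟨X, Y⟩ h
    simp only [Finset.coe_product, Set.mem_prod, Finset.mem_coe, mem_cx] at h ⊢
    obtain ⟨⟨hX, hXc, hXv⟩, hY, hYc, hYv⟩ := h
    exact ⟨Finset.union_subset (hX.trans hA) (hY.trans hB),
      con_union hXc hYc (z := v) (hXv (by simp)) (hYv hvH),
      hK.trans (hYv.trans Finset.subset_union_right)⟩
  · rintro ⟨X, Y⟩ h ⟨X', Y'⟩ h' he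
    simp only [Finset.coe_product, Set.mem_prod, Finset.mem_coe, mem_cx] at h h' he
    obtain ⟨⟨hX, hXc, hXv⟩, hY, hYc, hYv⟩ := h
    obtain ⟨⟨hX', hXc', hXv'⟩, hY', hYc', hYv'⟩ := h'
    have e : ∀ x, (x ∈ X ∨ x ∈ Y) ↔ (x ∈ X' ∨ x ∈ Y') := fun x => by
      simpa using (Finset.ext_iff.1 he x)
    have h1 := hXv (Finset.mem_singleton_self v)
    have h2 := hXv' (Finset.mem_singleton_self v)
    have h3 := hYv hvH
    have h4 := hYv' hvH
    ext x
    · grind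
    · grind

/-- A rooted system of access sets. -/
theorem access {W : Finset V} (hW : Con G W) {x : V} (hx : x ∈ W) :
    ∃ (d : V → ℕ) (P : V → Finset V), ∀ p ∈ W, p ≠ x →
      P p ⊆ W ∧ Con G (P p) ∧ x ∈ P p ∧ p ∉ P p ∧ Con G (insert p (P p)) ∧
        ∀ q ∈ P p, d q < d p := by
  have ex : ∀ p, ∃ Q, p ∈ W → (Q ∈ cx G W {x, p} ∧ ∀ Q' ∈ cx G W {x, p}, Q.card ≤ Q'.card) := by
    intro p
    by_cases hp : p ∈ W
    · obtain ⟨Q, h1, h2⟩ := Finset.exists_min_image (cx G W {x, p}) Finset.card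
        ⟨W, mem_cx.2 ⟨subset_rfl, hW, by intro y; simp; grind⟩⟩
      exact ⟨Q, fun _ => ⟨h1, h2⟩⟩
    · exact ⟨∅, fun h => absurd h hp⟩
  choose Q hQ using ex
  refine ⟨fun p => (Q p).card, fun p => (Q p).erase p, ?_⟩
  intro p hp hpx
  obtain ⟨hQ1, hQ2⟩ := hQ p hp
  obtain ⟨hQW, hQc, hQxp⟩ := mem_cx.1 hQ1
  have hxQ : x ∈ Q p := hQxp (by simp)
  have hpQ : p ∈ Q p := hQxp (by simp)
  obtain ⟨C, hC, hxC⟩ := br_exists (G := G) (W := Q p) (v := p) (con_single x)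
    (by simpa using hxQ) (by simpa using hpx)
  have hins := br_insert hQc hpQ hC
  have hsub : insert p C ⊆ Q p := Finset.insert_subset hpQ hC.1
  have hxC' : x ∈ C := hxC (by simp)
  have heq : insert p C = Q p := by
    apply Finset.eq_of_subset_of_card_le hsub
    apply hQ2
    exact mem_cx.2 ⟨hsub.trans hQW, hins, by intro y; simp; grind⟩
  have hCe : (Q p).erase p = C := by rw [← heq]; exact Finset.erase_insert hC.2.1
  beta_reduce
  rw [hCe]
  refine ⟨hC.1.trans hQW, hC.2.2.1, hxC', hC.2.1, hins, ?_⟩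
  intro q hq
  have := (hQ q (hQW (hC.1 hq))).2 C (mem_cx.2 ⟨hC.1.trans hQW, hC.2.2.1, by intro y; simp; grind⟩)
  have h3 := Finset.card_insert_of_notMem hC.2.1
  rw [heq] at h3
  show (Q q).card < (Q p).card
  omega

theorem card_le_cx {W : Finset V} (hW : Con G W) {x : V} (hx : x ∈ W) :
    W.card ≤ (cx G W {x}).card := by
  obtain ⟨d, P, hP⟩ := access hW hx
  apply Finset.card_le_card_of_injOn (fun p => if p = x then {x} else insert p (P p))
  · intro p hp
    simp only [Finset.mem_coe] at hp ⊢
    split_ifs with h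
    · exact mem_cx.2 ⟨by simpa using hx, con_single x, subset_rfl⟩
    · obtain ⟨h1, h2, h3, h4, h5, h6⟩ := hP p hp h
      exact mem_cx.2 ⟨Finset.insert_subset hp h1, h5, by simp [h3]⟩
  · intro p hp q hq he
    simp only [Finset.mem_coe] at hp hq he
    by_contra hne
    have e := Finset.ext_iff.1 he
    have ep := e p
    have eq := e q
    by_cases hpx : p = x <;> by_cases hqx : q = x
    · exact hne (hpx.trans hqx.symm)
    · simp [hpx, hqx] at eq
    · simp [hpx, hqx] at ep
    · simp [hpx, hqx, hne] at ep
      simp [hpx, hqx, Ne.symm hne] at eq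
      have a1 := (hP p hp hpx).2.2.2.2.2 q eq
      have a2 := (hP q hq hqx).2.2.2.2.2 p ep
      omega

/-- Counting pairs. -/
theorem pair_bound {W : Finset V} (hW : Con G W) {x : V} (hx : x ∈ W) :
    2 * (cs G (W.erase x)).card + (cx G W {x}).card ≤ (cx G W {x}).card * (cx G W {x}).card := by
  have ex : ∀ U, ∃ P, U ∈ cs G (W.erase x) → P ∈ cx G W {x} ∧ P ∪ U ∈ cx G W {x} ∧
      Disjoint P U := by
    intro U
    by_cases hU : U ∈ cs G (W.erase x)
    swap
    · exact ⟨∅, fun h => absurd h hU⟩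
    obtain ⟨hUW, hUc⟩ := mem_cs.1 hU
    obtain ⟨d, P, hP⟩ := access hW hx
    obtain ⟨p, hpU, hmin⟩ := Finset.exists_min_image U d hUc.1
    have hp := Finset.mem_erase.1 (hUW hpU)
    obtain ⟨h1, h2, h3, h4, h5, h6⟩ := hP p hp.2 hp.1
    refine ⟨P p, fun _ => ⟨mem_cx.2 ⟨h1, h2, by simpa using h3⟩, mem_cx.2 ⟨?_, ?_, ?_⟩, ?_⟩⟩
    · exact Finset.union_subset h1 (hUW.trans (Finset.erase_subset _ _))
    · have := con_union h5 hUc (Finset.mem_insert_self _ _) hpU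
      convert this using 1
      ext y
      simp
      grind
    · simp [h3]
    · rw [Finset.disjoint_left]
      intro q hq hqU
      have := h6 q hq
      have := hmin q hqU
      omega
  choose P hP using ex
  set β := cx G W {x}
  have h1 : ((cs G (W.erase x)) ×ˢ (Finset.univ : Finset Bool)).card ≤ β.offDiag.card := by
    apply Finset.card_le_card_of_injOn
      (fun q => if q.2 then (P q.1, P q.1 ∪ q.1) else (P q.1 ∪ q.1, P q.1))
    · rintro ⟨U, b⟩ h
      have hU : U ∈ cs G (W.erase x) := by simpa using h
      obtain ⟨a1, a2, a3⟩ := hP U hU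
      obtain ⟨u, hu⟩ := (mem_cs.1 hU).2.1
      have hne : P U ≠ P U ∪ U := fun e => by
        have : u ∈ P U := by rw [e]; simp [hu]
        exact Finset.disjoint_left.1 a3 this hu
      cases b <;> simp [a1, a2, hne, hne.symm]
    · rintro ⟨U, b⟩ h ⟨U', b'⟩ h' he
      have hU : U ∈ cs G (W.erase x) := by simpa using h
      have hU' : U' ∈ cs G (W.erase x) := by simpa using h'
      obtain ⟨a1, a2, a3⟩ := hP U hU
      obtain ⟨a1', a2', a3'⟩ := hP U' hU'
      obtain ⟨u, hu⟩ := (mem_cs.1 hU).2.1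
      obtain ⟨u', hu'⟩ := (mem_cs.1 hU').2.1
      rw [Finset.disjoint_left] at a3 a3'
      have fin : P U = P U' → P U ∪ U = P U' ∪ U' → U = U' := by
        intro e1 e2
        ext y
        have e1 := Finset.ext_iff.1 e1 y
        have e2 := Finset.ext_iff.1 e2 y
        simp only [Finset.mem_union] at e2
        have := @a3 y
        have := @a3' y
        tauto
      have bad : P U = P U' ∪ U' → P U ∪ U = P U' → False := by
        intro e1 e2
        have : u ∈ P U' := by rw [← e2]; simp [hu]
        have : u ∈ P U := by rw [e1]; simp [this]
        exact a3 this hu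
      cases b <;> cases b' <;> simp at he ⊢
      · exact fin he.2 he.1
      · exact (bad he.2 he.1).elim
      · exact (bad he.1 he.2).elim
      · exact fin he.1 he.2
  rw [Finset.card_product, Finset.offDiag_card] at h1
  simp at h1
  have h2 : β.card ≤ β.card * β.card := Nat.le_mul_self _
  omega

theorem cx_split {W H : Finset V} (w : V) :
    ∀ f : Finset V → ℤ, ∑ U ∈ cx G W H, f U =
      ∑ U ∈ cx G W (insert w H), f U + ∑ U ∈ (cx G W H).filter (fun U => w ∉ U), f U := by
  intro f
  rw [← Finset.sum_filter_add_sum_filter_not (cx G W H) (fun U => w ∈ U)]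
  congr 2
  ext U
  simp only [Finset.mem_filter, mem_cx, Finset.insert_subset_iff]
  tauto

/-- Local mean bound. -/
theorem local_mean (k : ℕ) : ∀ W H : Finset V, Con G W → Con G H → H ⊆ W → W.card ≤ H.card + k →
    0 ≤ ∑ U ∈ cx G W H, (2 * (U.card : ℤ) - W.card - H.card) := by
  induction k with
  | zero =>
    intro W H hW hH hHW hk
    have : H = W := Finset.eq_of_subset_of_card_le hHW (by omega)
    subst this
    apply Finset.sum_nonneg
    intro U hU
    have hU := mem_cx.1 hU
    have := Finset.card_le_card hU.2.2
    have : (H.card : ℤ) ≤ U.card := by exact_mod_cast this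
    linarith
  | succ k ih =>
    intro W H hW hH hHW hk
    by_cases hne : H = W
    · subst hne
      exact ih H H hH hH subset_rfl (by omega)
    obtain ⟨a, ha, w, hw, hwH, haw⟩ := hW.2 H hHW hH.1 hne
    obtain ⟨C, hC, hHC⟩ := br_exists (v := w) hH hHW hwH
    have hins : Con G (insert w H) := con_insert hH ha haw
    have hcard : (insert w H).card = H.card + 1 := Finset.card_insert_of_notMem hwH
    have hCW : C.card < W.card := Finset.card_lt_card
      ⟨hC.1, fun h => hC.2.1 (h hw)⟩
    have I1 := ih W (insert w H) hW hins (Finset.insert_subset hw hHW) (by omega)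
    have I2 := ih C H hC.2.2.1 hH hHC (by omega)
    rw [cx_split w]
    have hf : (cx G W H).filter (fun U => w ∉ U) = cx G C H := by
      ext U
      simp only [Finset.mem_filter, mem_cx]
      constructor
      · rintro ⟨⟨h1, h2, h3⟩, h4⟩
        exact ⟨br_sub hC h2 h1 h4 (h3 ha) (hHC ha), h2, h3⟩
      · rintro ⟨h1, h2, h3⟩
        exact ⟨⟨h1.trans hC.1, h2, h3⟩, fun h => hC.2.1 (h1 h)⟩
    rw [hf]
    have n1 : (cx G C H).card ≤ (cx G (insert w C) (insert w H)).card := by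
      apply Finset.card_le_card_of_injOn (fun U => insert w U)
      · intro U hU
        obtain ⟨h1, h2, h3⟩ := mem_cx.1 hU
        exact mem_cx.2 ⟨Finset.insert_subset_insert _ h1, con_insert h2 (h3 ha) haw,
          Finset.insert_subset_insert _ h3⟩
      · intro U hU U' hU' he
        obtain ⟨h1, h2, h3⟩ := mem_cx.1 hU
        obtain ⟨h1', h2', h3'⟩ := mem_cx.1 hU'
        have e1 : w ∉ U := fun h => hC.2.1 (h1 h)
        have e2 : w ∉ U' := fun h => hC.2.1 (h1' h)
        simp only at he
        rw [← Finset.erase_insert e1, he, Finset.erase_insert e2]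
    have n2 := card_le_cx (br_sdiff hW hw hC) (x := w) (by simp [hw, hC.2.1])
    have n3 := cx_prod (G := G) (W := W) (A := W \ C) (B := insert w C) (H := insert w H)
      (K := insert w H) (v := w) Finset.sdiff_subset (Finset.insert_subset hw hC.1) (by
        ext y; simp; grind [hC.2.1]) (by simp) subset_rfl
    have n4 : (W \ C).card * (cx G C H).card ≤ (cx G W (insert w H)).card :=
      (Nat.mul_le_mul n2 n1).trans n3
    have n5 : ((W \ C).card : ℤ) = W.card - C.card := by
      rw [Finset.card_sdiff_of_subset hC.1]; push_cast [hCW.le]; rfl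
    have n6 : ((W.card : ℤ) - C.card) * (cx G C H).card ≤ (cx G W (insert w H)).card := by
      rw [← n5]; exact_mod_cast n4
    have s1 : ∑ U ∈ cx G W (insert w H), (2 * (U.card : ℤ) - W.card - H.card) =
        ∑ U ∈ cx G W (insert w H), (2 * (U.card : ℤ) - W.card - (insert w H).card) +
          (cx G W (insert w H)).card := by
      rw [Finset.card_eq_sum_ones (cx G W (insert w H)), Nat.cast_sum, ← Finset.sum_add_distrib]
      apply Finset.sum_congr rfl
      intro U _
      rw [hcard]; push_cast; ring
    have s2 : ∑ U ∈ cx G C H, (2 * (U.card : ℤ) - W.card - H.card) =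
        ∑ U ∈ cx G C H, (2 * (U.card : ℤ) - C.card - H.card) -
          (W.card - C.card) * (cx G C H).card := by
      rw [Finset.card_eq_sum_ones (cx G C H), Nat.cast_sum, Finset.mul_sum,
        ← Finset.sum_sub_distrib]
      apply Finset.sum_congr rfl
      intro U _
      push_cast; ring
    rw [s1, s2]
    linarith

/-- Central counting inequality. -/
theorem key_ineq {W K : Finset V} (hW : Con G W) (hKW : K ⊆ W) (D : V → Finset V)
    (hD : ∀ x ∈ K, Br G W x (D x)) (hK1 : ∀ x ∈ K, ∀ y ∈ K, x ≠ y → y ∈ D x)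
    (hK2 : ∀ z ∈ W, ∃ x ∈ K, z ∉ D x) {x : V} (hx : x ∈ K) :
    2 * ((cx G (W \ D x) {x}).card + 1) * (cs G (D x)).card ≤
      ∑ w ∈ K.erase x, ((cx G (W \ D w) {w}).card + 1) * (cx G W {w}).card := by
  have hxW := hKW hx
  have hDx := hD x hx
  have hH : Con G (insert x (D x)) := br_insert hW hxW hDx
  have hBw : ∀ w ∈ K, Con G (W \ D w) := fun w hw => br_sdiff hW (hKW hw) (hD w hw)
  have hwB : ∀ w ∈ K, w ∈ W \ D w := fun w hw => by
    simp [hKW hw, (hD w hw).2.1]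
  have hBD : ∀ w ∈ K, w ≠ x → W \ D w ⊆ D x := fun w hw hwx =>
    br_sub hDx (hBw w hw) Finset.sdiff_subset
      (by simp [hxW, hK1 w hw x hx hwx]) (hwB w hw) (hK1 x hx w hw hwx.symm)
  obtain ⟨d, P, hP⟩ := access hH (Finset.mem_insert_self x (D x))
  set M := (cs G (D x)).filter (fun U => ∃ k ∈ K, k ∈ U) with hM
  -- gate property
  have gate : ∀ w ∈ K, ∀ U, Con G U → U ⊆ W → ∀ p ∈ U, p ∉ D w → ∀ q ∈ U, q ∈ D w → w ∈ U := by
    intro w hw U hU hUW p hp hpD q hq hqD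
    by_contra hwU
    exact hpD (br_sub (hD w hw) hU hUW hwU hq hqD hp)
  -- (a)
  have ha : (cs G (D x)).card ≤ M.card + ∑ w ∈ K.erase x, (cs G ((W \ D w).erase w)).card := by
    have : cs G (D x) ⊆ M ∪ (K.erase x).biUnion (fun w => cs G ((W \ D w).erase w)) := by
      intro U hU
      by_cases hm : ∃ k ∈ K, k ∈ U
      · exact Finset.mem_union_left _ (Finset.mem_filter.2 ⟨hU, hm⟩)
      · apply Finset.mem_union_right
        push Not at hm
        obtain ⟨hUD, hUc⟩ := mem_cs.1 hU
        obtain ⟨z, hz⟩ := hUc.1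
        obtain ⟨w, hw, hzw⟩ := hK2 z (hDx.1 (hUD hz))
        rw [Finset.mem_biUnion]
        refine ⟨w, Finset.mem_erase.2 ⟨?_, hw⟩, mem_cs.2 ⟨?_, hUc⟩⟩
        · rintro rfl; exact hzw (hUD hz)
        · intro u hu
          rw [Finset.mem_erase, Finset.mem_sdiff]
          refine ⟨fun h => hm w hw (h ▸ hu), hDx.1 (hUD hu), fun huD => ?_⟩
          exact hm w hw (gate w hw U hUc (hUD.trans hDx.1) z hz hzw u hu huD)
    exact (Finset.card_le_card this).trans ((Finset.card_union_le _ _).trans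
      (Nat.add_le_add_left Finset.card_biUnion_le _))
  -- (b)
  have hb : M.card ≤ ∑ w ∈ K.erase x, (cx G (D x) {w}).card := by
    have : M ⊆ (K.erase x).biUnion (fun w => cx G (D x) {w}) := by
      intro U hU
      obtain ⟨hU1, k, hk, hkU⟩ := Finset.mem_filter.1 hU
      obtain ⟨hUD, hUc⟩ := mem_cs.1 hU1
      rw [Finset.mem_biUnion]
      refine ⟨k, Finset.mem_erase.2 ⟨?_, hk⟩, mem_cx.2 ⟨hUD, hUc, by simpa using hkU⟩⟩
      rintro rfl
      exact hDx.2.1 (hUD hkU)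
    exact (Finset.card_le_card this).trans Finset.card_biUnion_le
  -- (c)
  have hc : M.card ≤ ∑ w ∈ K.erase x, (cx G (insert x (D x)) {w, x}).card := by
    have : M ⊆ (K.erase x).biUnion (fun w =>
        (cx G (insert x (D x)) {w, x}).image (fun Y => Y \ P w)) := by
      intro U hU
      obtain ⟨hU1, k, hk, hkU⟩ := Finset.mem_filter.1 hU
      obtain ⟨hUD, hUc⟩ := mem_cs.1 hU1
      obtain ⟨p, hpU, hmin⟩ := Finset.exists_min_image U d hUc.1
      have hpx : p ≠ x := fun h => hDx.2.1 (hUD (h ▸ hpU))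
      obtain ⟨h1, h2, h3, h4, h5, h6⟩ := hP p (Finset.mem_insert_of_mem (hUD hpU)) hpx
      have hdis : ∀ q, q ∈ P p → q ∉ U := fun q hq hqU => by
        have := h6 q hq
        have := hmin q hqU
        omega
      have hUW := hUD.trans hDx.1
      obtain ⟨w, hw, hpw⟩ := hK2 p (hUW hpU)
      have hwx : w ≠ x := by rintro rfl; exact hpw (hUD hpU)
      have hwp : w = p := by
        by_contra hne
        have hw1 : w ∈ insert p (P p) := gate w hw _ h5 (by
          apply Finset.insert_subset (hUW hpU) (h1.trans (Finset.insert_subset hxW hDx.1)))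
          p (by simp) hpw x (by simp [h3]) (hK1 w hw x hx hwx)
        have hw1 : w ∈ P p := by
          rcases Finset.mem_insert.1 hw1 with h | h
          · exact absurd h hne
          · exact h
        apply hdis w hw1
        by_cases hkw : k = w
        · exact hkw ▸ hkU
        · exact gate w hw U hUc hUW p hpU hpw k hkU (hK1 w hw k hk (Ne.symm hkw))
      subst hwp
      rw [Finset.mem_biUnion]
      refine ⟨w, Finset.mem_erase.2 ⟨hwx, hw⟩, Finset.mem_image.2 ⟨U ∪ P w, mem_cx.2 ⟨?_, ?_, ?_⟩, ?_⟩⟩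
      · exact Finset.union_subset (hUD.trans (Finset.subset_insert _ _)) h1
      · have := con_union hUc h5 hpU (Finset.mem_insert_self _ _)
        convert this using 1
        ext y
        simp
        grind
      · intro y
        simp
        grind
      · ext y
        have := hdis y
        simp
        tauto
    exact (Finset.card_le_card this).trans (Finset.card_biUnion_le.trans
      (Finset.sum_le_sum fun w _ => Finset.card_image_le))
  -- (d)
  have hd : ∀ w ∈ K.erase x, (cx G (W \ D w) {w}).card ≤ (cx G (D x) {w}).card := by
    intro w hw
    obtain ⟨hwx, hw⟩ := Finset.mem_erase.1 hw
    apply Finset.card_le_card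
    intro U hU
    obtain ⟨h1, h2⟩ := mem_cx.1 hU
    exact mem_cx.2 ⟨h1.trans (hBD w hw hwx), h2⟩
  -- (e)
  have he : ∀ w ∈ K.erase x, (cx G (W \ D w) {w}).card ≤ (cx G (insert x (D x)) {w, x}).card := by
    intro w hw
    obtain ⟨hwx, hw⟩ := Finset.mem_erase.1 hw
    have hwD := hK1 x hx w hw hwx.symm
    obtain ⟨h1, h2, h3, h4, h5, h6⟩ := hP w (Finset.mem_insert_of_mem hwD) hwx
    have hPD : P w ⊆ D w := br_sub (hD w hw) h2 (h1.trans (Finset.insert_subset hxW hDx.1)) h4 h3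
      (hK1 w hw x hx hwx)
    apply Finset.card_le_card_of_injOn (fun U => U ∪ P w)
    · intro U hU
      obtain ⟨g1, g2, g3⟩ := mem_cx.1 hU
      have hwU : w ∈ U := g3 (by simp)
      refine mem_cx.2 ⟨?_, ?_, ?_⟩
      · exact Finset.union_subset ((g1.trans (hBD w hw hwx)).trans (Finset.subset_insert _ _)) h1
      · have := con_union g2 h5 hwU (Finset.mem_insert_self _ _)
        convert this using 1
        ext y
        simp
        grind
      · intro y
        simp
        grind
    · intro U hU U' hU' heq
      obtain ⟨g1, g2, g3⟩ := mem_cx.1 hU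
      obtain ⟨g1', g2', g3'⟩ := mem_cx.1 hU'
      ext y
      have e := Finset.ext_iff.1 heq y
      have e1 := @g1 y
      have e2 := @g1' y
      have e3 := @hPD y
      simp at e e1 e2 e3
      tauto
  -- (f)
  have hf : ∀ w ∈ K.erase x, (cx G (D x) {w}).card +
      (cx G (W \ D x) {x}).card * (cx G (insert x (D x)) {w, x}).card ≤ (cx G W {w}).card := by
    intro w hw
    obtain ⟨hwx, hw⟩ := Finset.mem_erase.1 hw
    have f1 := cx_prod (G := G) (W := W) (A := W \ D x) (B := insert x (D x)) (H := {w, x})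
      (K := {w, x}) (v := x) Finset.sdiff_subset (Finset.insert_subset hxW hDx.1) (by
        ext y; simp; grind [hDx.2.1]) (by simp) subset_rfl
    have f2 : (cx G (D x) {w}).card + (cx G W {w, x}).card ≤ (cx G W {w}).card := by
      rw [← Finset.card_union_of_disjoint]
      · apply Finset.card_le_card
        intro U hU
        rcases Finset.mem_union.1 hU with h | h
        · obtain ⟨g1, g2⟩ := mem_cx.1 h
          exact mem_cx.2 ⟨g1.trans hDx.1, g2⟩
        · obtain ⟨g1, g2, g3⟩ := mem_cx.1 h
          exact mem_cx.2 ⟨g1, g2, by simpa using g3 (Finset.mem_insert_self w {x})⟩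
      · rw [Finset.disjoint_left]
        intro U h h'
        have g1 := (mem_cx.1 h).1
        have g3 := (mem_cx.1 h').2.2
        exact hDx.2.1 (g1 (g3 (by simp)))
    omega
  -- (g)
  have hg : ∀ w ∈ K.erase x, 2 * (cs G ((W \ D w).erase w)).card + (cx G (W \ D w) {w}).card ≤
      (cx G (W \ D w) {w}).card * (cx G (W \ D w) {w}).card := by
    intro w hw
    have hw := Finset.mem_of_mem_erase hw
    exact pair_bound (hBw w hw) (hwB w hw)
  -- assemble
  generalize hβx : (cx G (W \ D x) {x}).card = βx at *
  have term : ∀ w ∈ K.erase x, 2 * (cx G (D x) {w}).card +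
      2 * βx * (cx G (insert x (D x)) {w, x}).card +
      2 * (βx + 1) * (cs G ((W \ D w).erase w)).card ≤
      ((cx G (W \ D w) {w}).card + 1) * (cx G W {w}).card := by
    intro w hw
    have t1 := hd w hw
    have t2 := he w hw
    have t3 := hf w hw
    have t4 := hg w hw
    have t0 : 1 ≤ (cx G (W \ D w) {w}).card := Finset.card_pos.2 ⟨{w}, mem_cx.2
      ⟨by simpa using hwB w (Finset.mem_of_mem_erase hw), con_single w, subset_rfl⟩⟩
    generalize (cx G (W \ D w) {w}).card = β at *
    generalize (cx G (D x) {w}).card = n1 at *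
    generalize (cx G (insert x (D x)) {w, x}).card = n2 at *
    generalize (cs G ((W \ D w).erase w)).card = c at *
    generalize (cx G W {w}).card = N at *
    refine le_trans ?_ (Nat.mul_le_mul_left _ t3)
    obtain ⟨γ, rfl⟩ : ∃ γ, β = γ + 1 := ⟨β - 1, by omega⟩
    have t5 : 2 * c ≤ γ * (γ + 1) := by nlinarith
    nlinarith [Nat.mul_le_mul_left γ t1, Nat.mul_le_mul_left (βx * γ) t2,
        Nat.mul_le_mul_left (βx + 1) t5]
  calc 2 * (βx + 1) * (cs G (D x)).card
      ≤ 2 * (βx + 1) * (M.card + ∑ w ∈ K.erase x, (cs G ((W \ D w).erase w)).card) :=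
        Nat.mul_le_mul_left _ ha
    _ = 2 * M.card + 2 * βx * M.card +
        ∑ w ∈ K.erase x, 2 * (βx + 1) * (cs G ((W \ D w).erase w)).card := by
        rw [← Finset.mul_sum]; ring
    _ ≤ 2 * ∑ w ∈ K.erase x, (cx G (D x) {w}).card +
        2 * βx * ∑ w ∈ K.erase x, (cx G (insert x (D x)) {w, x}).card +
        ∑ w ∈ K.erase x, 2 * (βx + 1) * (cs G ((W \ D w).erase w)).card := by
        gcongr
    _ = ∑ w ∈ K.erase x, (2 * (cx G (D x) {w}).card +
        2 * βx * (cx G (insert x (D x)) {w, x}).card +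
        2 * (βx + 1) * (cs G ((W \ D w).erase w)).card) := by
        rw [Finset.mul_sum, Finset.mul_sum, ← Finset.sum_add_distrib, ← Finset.sum_add_distrib]
    _ ≤ _ := Finset.sum_le_sum term

theorem good_of_system {W K : Finset V} (hW : Con G W) (hKW : K ⊆ W) (D : V → Finset V)
    (hD : ∀ x ∈ K, Br G W x (D x)) (hK1 : ∀ x ∈ K, ∀ y ∈ K, x ≠ y → y ∈ D x)
    (hK2 : ∀ z ∈ W, ∃ x ∈ K, z ∉ D x) (hne : K.Nonempty) :
    ∃ x ∈ K, 2 * (W \ D x).card * (cs G (D x)).card ≤ (D x).card * (cx G W {x}).card := by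
  by_contra hcon
  push Not at hcon
  have hBD : ∀ x ∈ K, ∀ w ∈ K, w ≠ x → W \ D w ⊆ D x := fun x hx w hw hwx =>
    br_sub (hD x hx) (br_sdiff hW (hKW hw) (hD w hw)) Finset.sdiff_subset
      (by simp [hKW hx, hK1 w hw x hx hwx])
      (by simp [hKW hw, (hD w hw).2.1] : w ∈ W \ D w) (hK1 x hx w hw hwx.symm)
  have hcard : ∀ x ∈ K, ∑ y ∈ K.erase x, (W \ D y).card ≤ (D x).card := by
    intro x hx
    rw [← Finset.card_biUnion]
    · apply Finset.card_le_card
      rw [Finset.biUnion_subset]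
      intro y hy
      obtain ⟨hyx, hy⟩ := Finset.mem_erase.1 hy
      exact hBD x hx y hy hyx
    · intro y hy z hz hyz
      have hy := Finset.mem_of_mem_erase hy
      have hz := Finset.mem_of_mem_erase hz
      rw [Function.onFun, Finset.disjoint_left]
      intro u hu hu'
      have := hBD z hz y hy hyz hu
      simp at hu'
      exact hu'.2 this
  have hlt : ∑ x ∈ K, ((cx G (W \ D x) {x}).card + 1) * ((D x).card * (cx G W {x}).card) <
      ∑ x ∈ K, ((cx G (W \ D x) {x}).card + 1) * (2 * (W \ D x).card * (cs G (D x)).card) :=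
    Finset.sum_lt_sum_of_nonempty hne fun x hx =>
      Nat.mul_lt_mul_of_pos_left (hcon x hx) (by omega)
  have hle : ∑ x ∈ K, ((cx G (W \ D x) {x}).card + 1) * (2 * (W \ D x).card * (cs G (D x)).card) ≤
      ∑ x ∈ K, ∑ w ∈ K.erase x,
        (W \ D x).card * (((cx G (W \ D w) {w}).card + 1) * (cx G W {w}).card) := by
    apply Finset.sum_le_sum
    intro x hx
    have := Nat.mul_le_mul_left (W \ D x).card (key_ineq hW hKW D hD hK1 hK2 hx)
    rw [Finset.mul_sum] at this
    refine le_trans (le_of_eq ?_) this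
    ring
  have hcomm : ∑ x ∈ K, ∑ w ∈ K.erase x,
        (W \ D x).card * (((cx G (W \ D w) {w}).card + 1) * (cx G W {w}).card) =
      ∑ w ∈ K, ∑ x ∈ K.erase w,
        (W \ D x).card * (((cx G (W \ D w) {w}).card + 1) * (cx G W {w}).card) := by
    apply Finset.sum_comm'
    intro x y
    simp only [Finset.mem_erase]
    grind
  have hle2 : ∑ w ∈ K, ∑ x ∈ K.erase w,
        (W \ D x).card * (((cx G (W \ D w) {w}).card + 1) * (cx G W {w}).card) ≤
      ∑ x ∈ K, ((cx G (W \ D x) {x}).card + 1) * ((D x).card * (cx G W {x}).card) := by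
    apply Finset.sum_le_sum
    intro w hw
    rw [← Finset.sum_mul]
    have := Nat.mul_le_mul_right (((cx G (W \ D w) {w}).card + 1) * (cx G W {w}).card) (hcard w hw)
    refine this.trans (le_of_eq ?_)
    ring
  omega

/-- Existence of a good vertex. -/
theorem good_vertex {W : Finset V} (hW : Con G W) :
    ∃ v ∈ W, ∀ C, Br G W v C →
      2 * (W \ C).card * (cs G C).card ≤ C.card * (cx G W {v}).card := by
  by_contra hcon
  push Not at hcon
  set bad : Finset (V × Finset V) := (W ×ˢ W.powerset).filter (fun p => Br G W p.1 p.2 ∧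
    p.2.card * (cx G W {p.1}).card < 2 * (W \ p.2).card * (cs G p.2).card) with hbad
  have hmem : ∀ v C, v ∈ W → Br G W v C →
      C.card * (cx G W {v}).card < 2 * (W \ C).card * (cs G C).card → (v, C) ∈ bad := by
    intro v C hv h1 h2
    simp only [hbad, Finset.mem_filter, Finset.mem_product, Finset.mem_powerset]
    exact ⟨⟨hv, h1.1⟩, h1, h2⟩
  obtain ⟨⟨v, C⟩, hvC, hmin⟩ := Finset.exists_min_image bad (fun p => p.2.card) (by
    obtain ⟨v, hv⟩ := hW.1
    obtain ⟨C, h1, h2⟩ := hcon v hv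
    exact ⟨_, hmem v C hv h1 h2⟩)
  simp only [hbad, Finset.mem_filter, Finset.mem_product, Finset.mem_powerset] at hvC
  obtain ⟨⟨hv, hCW⟩, hC, hCbad⟩ := hvC
  have ex : ∀ w, ∃ D, w ∈ W → (Br G W w D ∧
      D.card * (cx G W {w}).card < 2 * (W \ D).card * (cs G D).card) ∧ (w = v → D = C) := by
    intro w
    by_cases hw : w ∈ W
    · by_cases hwv : w = v
      · subst hwv
        exact ⟨C, fun _ => ⟨⟨hC, hCbad⟩, fun _ => rfl⟩⟩
      · obtain ⟨D, h⟩ := hcon w hw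
        exact ⟨D, fun _ => ⟨h, fun h => absurd h hwv⟩⟩
    · exact ⟨∅, fun h => absurd h hw⟩
  choose D hD using ex
  have hBr : ∀ w ∈ W, Br G W w (D w) := fun w hw => (hD w hw).1.1
  have hDv : D v = C := (hD v hv).2 rfl
  have hvD : ∀ w ∈ C, v ∈ D w := by
    intro w hw
    by_contra hvD
    have hwW := hCW hw
    have hwv : w ≠ v := fun h => hC.2.1 (h ▸ hw)
    have hsub := br_sub hC (br_insert hW hwW (hBr w hwW))
      (Finset.insert_subset hwW (hBr w hwW).1) (by simp [hvD, hwv.symm])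
      (Finset.mem_insert_self _ _) hw
    have h1 := Finset.card_le_card hsub
    rw [Finset.card_insert_of_notMem (hBr w hwW).2.1] at h1
    have h2 := hmin (w, D w) (hmem w (D w) hwW (hD w hwW).1.1 (hD w hwW).1.2)
    simp only at h2
    omega
  set K := insert v (C.filter (fun w => ∀ u ∈ C, u ≠ w → w ∈ D u)) with hK
  have hKW : K ⊆ W := by
    intro x hx
    simp only [hK, Finset.mem_insert, Finset.mem_filter] at hx
    rcases hx with rfl | hx
    · exact hv
    · exact hCW hx.1
  obtain ⟨x, hx, hgood⟩ := good_of_system hW hKW D (fun x hx => hBr x (hKW hx)) (by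
      intro x hx y hy hxy
      simp only [hK, Finset.mem_insert, Finset.mem_filter] at hx hy
      rcases hx with rfl | hx <;> rcases hy with rfl | hy
      · exact absurd rfl hxy
      · rw [hDv]; exact hy.1
      · exact hvD x hx.1
      · exact hy.2 x hx.1 hxy) (by
      intro z hz
      by_cases hzC : z ∈ C
      swap
      · exact ⟨v, by simp [hK], by rw [hDv]; exact hzC⟩
      obtain ⟨u, hu, humax⟩ := Finset.exists_max_image (C.filter (fun u => z ∉ D u))
        (fun u => (W \ D u).card) ⟨z, by simp [hzC, (hBr z hz).2.1]⟩
      simp only [Finset.mem_filter] at hu humax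
      refine ⟨u, ?_, hu.2⟩
      simp only [hK, Finset.mem_insert, Finset.mem_filter]
      refine Or.inr ⟨hu.1, ?_⟩
      intro u' hu' hne
      by_contra hud
      have huW := hCW hu.1
      have hu'W := hCW hu'
      have h1 : u' ∈ D u := by
        by_contra hn
        have := br_sub (hBr u' hu'W) (br_insert hW huW (hBr u huW))
          (Finset.insert_subset huW (hBr u huW).1) (by simp [hn, hne])
          (Finset.mem_insert_of_mem (hvD u hu.1)) (hvD u' hu')
        exact hud (this (Finset.mem_insert_self _ _))
      have h2 : W \ D u ⊆ W \ D u' := by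
        intro y hy
        rw [Finset.mem_sdiff]
        refine ⟨(Finset.mem_sdiff.1 hy).1, fun hyD => ?_⟩
        have := br_sub (hBr u' hu'W) (br_sdiff hW huW (hBr u huW)) Finset.sdiff_subset
          (by simp [h1]) hy hyD
        exact hud (this (by simp [huW, (hBr u huW).2.1]))
      have h3 : (W \ D u).card < (W \ D u').card := by
        apply Finset.card_lt_card
        refine ⟨h2, fun h => ?_⟩
        have := h (show u' ∈ W \ D u' by simp [hu'W, (hBr u' hu'W).2.1])
        simp [h1] at this
      have h4 := humax u' ⟨hu', fun hzD => by
        have := h2 (show z ∈ W \ D u by simp [hz, hu.2])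
        simp [hzD] at this⟩
      omega) ⟨v, by simp [hK]⟩
  have := (hD x (hKW hx)).1.2
  omega

/-- Paths with a marked end. -/
inductive PathEnd (G : SimpleGraph V) : Finset V → V → Prop
  | single (x : V) : PathEnd G {x} x
  | cons {W : Finset V} {x y : V} (h : PathEnd G W x) (hy : y ∉ W) (hxy : G.Adj x y)
      (hu : ∀ z ∈ W, G.Adj y z → z = x) : PathEnd G (insert y W) y

theorem pe_mem {W : Finset V} {x : V} (h : PathEnd G W x) : x ∈ W := by
  cases h <;> simp

theorem pe_con {W : Finset V} {x : V} (h : PathEnd G W x) : Con G W := by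
  induction h with
  | single x => exact con_single x
  | cons h hy hxy hu ih => exact con_insert ih (pe_mem h) hxy

theorem cx_cons {W : Finset V} {x y : V} (hy : y ∉ W) (hxy : G.Adj x y)
    (hu : ∀ z ∈ W, G.Adj y z → z = x) :
    cx G (insert y W) {y} = insert {y} ((cx G W {x}).image (fun U => insert y U)) := by
  ext U
  simp only [Finset.mem_insert, Finset.mem_image, mem_cx, Finset.singleton_subset_iff]
  constructor
  · rintro ⟨h1, h2, h3⟩
    by_cases hU : U = {y}
    · exact Or.inl hU
    right
    have hUW : U.erase y ⊆ W := by
      intro z hz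
      obtain ⟨hz1, hz2⟩ := Finset.mem_erase.1 hz
      rcases Finset.mem_insert.1 (h1 hz2) with h | h
      · exact absurd h hz1
      · exact h
    have hall : ∀ T ⊆ U.erase y, T.Nonempty → T ≠ U.erase y → ∃ a ∈ T, ∃ b ∈ U.erase y,
        b ∉ T ∧ G.Adj a b := by
      intro T hT hne hTU
      by_cases hxT : x ∈ T
      · obtain ⟨a, ha, b, hb, hbT, hab⟩ := h2.2 (insert y T)
          (Finset.insert_subset h3 (hT.trans (Finset.erase_subset _ _))) (by simp) (fun h => by
            apply hTU
            rw [← h, Finset.erase_insert]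
            exact fun hyT => by simpa using hT hyT)
        simp only [Finset.mem_insert, not_or] at ha hbT
        have hbU : b ∈ U.erase y := Finset.mem_erase.2 ⟨hbT.1, hb⟩
        rcases ha with rfl | ha
        · have := hu b (hUW hbU) hab
          exact absurd (this ▸ hxT) hbT.2
        · exact ⟨a, ha, b, hbU, hbT.2, hab⟩
      · obtain ⟨a, ha, b, hb, hbT, hab⟩ := h2.2 T (hT.trans (Finset.erase_subset _ _)) hne
          (fun h => by
            have : y ∈ T := h ▸ h3
            simpa using hT this)
        refine ⟨a, ha, b, Finset.mem_erase.2 ⟨?_, hb⟩, hbT, hab⟩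
        rintro rfl
        exact hxT (hu a (hUW (hT ha)) hab.symm ▸ ha)
    obtain ⟨a, ha, b, hb, hbT, hab⟩ := h2.2 {y} (by simpa using h3) (by simp) (Ne.symm hU)
    simp at ha hbT
    subst ha
    have hbU : b ∈ U.erase a := Finset.mem_erase.2 ⟨hbT, hb⟩
    have := hu b (hUW hbU) hab
    subst this
    exact ⟨U.erase a, ⟨hUW, ⟨⟨b, hbU⟩, hall⟩, hbU⟩, Finset.insert_erase h3⟩
  · rintro (rfl | ⟨U', ⟨h1, h2, h3⟩, rfl⟩)
    · exact ⟨by simp, con_single _, by simp⟩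
    · exact ⟨Finset.insert_subset_insert _ h1, con_insert h2 h3 hxy, by simp⟩

theorem sum_cx_cons {W : Finset V} {x y : V} (hy : y ∉ W) (hxy : G.Adj x y)
    (hu : ∀ z ∈ W, G.Adj y z → z = x) (f : Finset V → ℕ) :
    ∑ U ∈ cx G (insert y W) {y}, f U = f {y} + ∑ U ∈ cx G W {x}, f (insert y U) := by
  rw [cx_cons hy hxy hu, Finset.sum_insert, Finset.sum_image]
  · intro U hU U' hU' he
    have h1 : y ∉ U := fun h => hy ((mem_cx.1 hU).1 h)
    have h2 : y ∉ U' := fun h => hy ((mem_cx.1 hU').1 h)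
    simp only at he
    rw [← Finset.erase_insert h1, he, Finset.erase_insert h2]
  · simp only [Finset.mem_image, mem_cx, not_exists, not_and]
    rintro U ⟨h1, h2, h3⟩ he
    have hx : x ∈ U := h3 (by simp)
    have : x ∈ ({y} : Finset V) := by rw [← he]; simp [hx]
    simp at this
    exact hxy.ne this

theorem pe_cx {W : Finset V} {x : V} (h : PathEnd G W x) :
    (cx G W {x}).card = W.card ∧ 2 * ∑ U ∈ cx G W {x}, U.card = W.card * (W.card + 1) := by
  induction h with
  | single x =>
    have : cx G {x} {x} = {{x}} := by
      ext U
      simp only [mem_cx, Finset.mem_singleton]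
      constructor
      · rintro ⟨h1, h2, h3⟩
        exact Finset.Subset.antisymm h1 h3
      · rintro rfl
        exact ⟨subset_rfl, con_single _, subset_rfl⟩
    rw [this]
    simp
  | @cons W x y h hy hxy hu ih =>
    obtain ⟨i1, i2⟩ := ih
    have hc : (cx G (insert y W) {y}).card = W.card + 1 := by
      rw [Finset.card_eq_sum_ones, sum_cx_cons hy hxy hu, ← Finset.card_eq_sum_ones, i1]
      ring
    have hs : ∑ U ∈ cx G W {x}, (insert y U).card = ∑ U ∈ cx G W {x}, U.card + W.card := by
      rw [← i1, Finset.card_eq_sum_ones (cx G W {x}), ← Finset.sum_add_distrib]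
      apply Finset.sum_congr rfl
      intro U hU
      exact Finset.card_insert_of_notMem (fun h => hy ((mem_cx.1 hU).1 h))
    rw [hc, Finset.card_insert_of_notMem hy, sum_cx_cons hy hxy hu, hs]
    refine ⟨rfl, ?_⟩
    simp
    linarith

theorem sum_cs_insert {W : Finset V} {y : V} (hy : y ∉ W) (f : Finset V → ℕ) :
    ∑ U ∈ cs G (insert y W), f U = ∑ U ∈ cs G W, f U + ∑ U ∈ cx G (insert y W) {y}, f U := by
  rw [← Finset.sum_union]
  · congr 1
    ext U
    simp only [Finset.mem_union, mem_cs, mem_cx, Finset.singleton_subset_iff]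
    constructor
    · rintro ⟨h1, h2⟩
      by_cases hyU : y ∈ U
      · exact Or.inr ⟨h1, h2, hyU⟩
      · exact Or.inl ⟨(Finset.subset_insert_iff_of_notMem hyU).1 h1, h2⟩
    · rintro (⟨h1, h2⟩ | ⟨h1, h2, h3⟩)
      · exact ⟨h1.trans (Finset.subset_insert _ _), h2⟩
      · exact ⟨h1, h2⟩
  · rw [Finset.disjoint_left]
    intro U h1 h2
    exact hy ((mem_cs.1 h1).1 ((mem_cx.1 h2).2.2 (by simp)))

theorem pe_cs {W : Finset V} {x : V} (h : PathEnd G W x) :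
    2 * (cs G W).card = W.card * (W.card + 1) ∧
      6 * ∑ U ∈ cs G W, U.card = W.card * (W.card + 1) * (W.card + 2) := by
  induction h with
  | single x =>
    have : cs G {x} = {{x}} := by
      ext U
      simp only [mem_cs, Finset.mem_singleton]
      constructor
      · rintro ⟨h1, h2⟩
        rcases Finset.subset_singleton_iff.1 h1 with h | h
        · exact absurd h h2.1.ne_empty
        · exact h
      · rintro rfl
        exact ⟨subset_rfl, con_single _⟩
    rw [this]
    simp
  | @cons W x y h hy hxy hu ih =>
    obtain ⟨i1, i2⟩ := ih
    obtain ⟨j1, j2⟩ := pe_cx (PathEnd.cons h hy hxy hu)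
    have e1 : (cs G (insert y W)).card = (cs G W).card + (cx G (insert y W) {y}).card := by
      simp only [Finset.card_eq_sum_ones]
      exact sum_cs_insert hy _
    have e2 := sum_cs_insert (G := G) hy Finset.card
    rw [e1, e2, j1]
    rw [Finset.card_insert_of_notMem hy] at *
    constructor
    · linarith
    · nlinarith

theorem pe_join {W₁ : Finset V} {v : V} (h : PathEnd G W₁ v) :
    ∀ W₂, PathEnd G W₂ v → (∀ z ∈ W₁, z ∈ W₂ → z = v) →
      (∀ a ∈ W₁, ∀ b ∈ W₂, G.Adj a b → a = v ∨ b = v) → ∃ e, PathEnd G (W₁ ∪ W₂) e := by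
  induction h with
  | single x =>
    intro W₂ h2 _ _
    refine ⟨x, ?_⟩
    rwa [Finset.union_eq_right.2 (by simpa using pe_mem h2)]
  | @cons W x y h hy hxy hu ih =>
    intro W₂ h2 hd he
    have hxW := pe_mem h
    have hx2 : x ∉ W₂ := fun hx => by
      have := hd x (by simp [hxW]) hx
      exact hxy.ne this
    have h2' : PathEnd G (insert x W₂) x := PathEnd.cons h2 hx2 hxy.symm (by
      intro z hz hxz
      rcases he x (by simp [hxW]) z hz hxz with h | h
      · exact absurd h hxy.ne
      · exact h)
    obtain ⟨e, hE⟩ := ih _ h2' (by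
      intro z hz hz2
      rcases Finset.mem_insert.1 hz2 with h | h
      · exact h
      · have := hd z (by simp [hz]) h
        exact absurd (this ▸ hz) hy) (by
      intro a ha b hb hab
      rcases Finset.mem_insert.1 hb with h | h
      · exact Or.inr h
      · rcases he a (by simp [ha]) b h hab with h' | h'
        · exact absurd (h' ▸ ha) hy
        · subst h'
          exact Or.inl (hu a ha hab.symm))
    refine ⟨e, ?_⟩
    convert hE using 1
    have := pe_mem h2
    ext z
    simp
    grind

theorem pe_of_card (k : ℕ) : ∀ (W : Finset V) (v : V), W.card ≤ k → Con G W → v ∈ W →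
    (cx G W {v}).card ≤ W.card → PathEnd G W v := by
  induction k with
  | zero =>
    intro W v hk hW hv
    have : W = ∅ := by simpa using hk
    simp [this] at hv
  | succ k ih =>
    intro W v hk hW hv hc
    by_cases hWv : W = {v}
    · rw [hWv]; exact PathEnd.single v
    obtain ⟨a, ha, w, hw, hwT, haw⟩ := hW.2 {v} (by simpa using hv) (by simp) (Ne.symm hWv)
    simp at ha hwT
    subst ha
    obtain ⟨C, hC, hwC⟩ := br_exists (W := W) (v := a) (con_single (G := G) w) (by simpa using hw)
      (by simpa using Ne.symm hwT)
    have hwC : w ∈ C := hwC (by simp)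
    have n1 := card_le_cx (br_sdiff hW hv hC) (x := a) (by simp [hv, hC.2.1])
    have n2 := card_le_cx (br_insert hW hv hC) (x := a) (by simp)
    have n3 := cx_prod (G := G) (W := W) (A := W \ C) (B := insert a C) (H := {a})
      (K := {a}) (v := a) Finset.sdiff_subset (Finset.insert_subset hv hC.1) (by
        ext y; simp; grind [hC.2.1]) (by simp) subset_rfl
    have n4 := (Nat.mul_le_mul n1 n2).trans (n3.trans hc)
    have n5 : (W \ C).card + C.card = W.card := Finset.card_sdiff_add_card_eq_card hC.1
    rw [Finset.card_insert_of_notMem hC.2.1] at n4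
    have n6 : 0 < C.card := Finset.card_pos.2 ⟨w, hwC⟩
    have n7 : (W \ C).card ≤ 1 := by
      by_contra hlt
      push Not at hlt
      nlinarith
    have hWC : W = insert a C := by
      symm
      apply Finset.eq_of_subset_of_card_le (Finset.insert_subset hv hC.1)
      rw [Finset.card_insert_of_notMem hC.2.1]
      omega
    have hcard : W.card = C.card + 1 := by
      rw [hWC, Finset.card_insert_of_notMem hC.2.1]
    -- the family of sets through w
    set F := (cx G C {w}).image (fun U => insert a U) with hF
    have hFcard : F.card = (cx G C {w}).card := by
      apply Finset.card_image_of_injOn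
      intro U hU U' hU' he
      have h1 : a ∉ U := fun h => hC.2.1 ((mem_cx.1 hU).1 h)
      have h2 : a ∉ U' := fun h => hC.2.1 ((mem_cx.1 hU').1 h)
      simp only at he
      rw [← Finset.erase_insert h1, he, Finset.erase_insert h2]
    have hFw : ∀ U ∈ F, w ∈ U := by
      intro U hU
      obtain ⟨U', hU', rfl⟩ := Finset.mem_image.1 hU
      have := (mem_cx.1 hU').2.2 (Finset.mem_singleton_self w)
      simp [this]
    have hFs : F ⊆ cx G W {a} := by
      intro U hU
      obtain ⟨U', hU', rfl⟩ := Finset.mem_image.1 hU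
      obtain ⟨h1, h2, h3⟩ := mem_cx.1 hU'
      exact mem_cx.2 ⟨Finset.insert_subset hv (h1.trans hC.1),
        con_insert h2 (h3 (by simp)) haw.symm, by simp⟩
    have hane : ({a} : Finset V) ∉ F := fun h => by
      have := hFw _ h
      simp at this
      exact hwT this
    have hacx : ({a} : Finset V) ∈ cx G W {a} := mem_cx.2 ⟨by simpa using hv, con_single a, subset_rfl⟩
    have m1 := Finset.card_le_card (Finset.insert_subset hacx hFs)
    rw [Finset.card_insert_of_notMem hane, hFcard] at m1
    have m2 := card_le_cx hC.2.2.1 hwC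
    have hpe := ih C w (by omega) hC.2.2.1 hwC (by omega)
    rw [hWC]
    refine PathEnd.cons hpe hC.2.1 haw.symm ?_
    intro z hz haz
    by_contra hzw
    have hz1 : ({a, z} : Finset V) ∈ cx G W {a} := mem_cx.2
      ⟨by intro y; simp; rintro (rfl | rfl); exacts [hv, hC.1 hz], con_pair haz, by simp⟩
    have hz2 : ({a, z} : Finset V) ∉ insert {a} F := by
      intro h
      rcases Finset.mem_insert.1 h with h | h
      · have : z ∈ ({a} : Finset V) := by rw [← h]; simp
        simp at this
        exact haz.ne this.symm
      · have := hFw _ h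
        simp at this
        rcases this with h | h
        · exact hwT h
        · exact hzw h.symm
    have m3 := Finset.card_le_card (Finset.insert_subset hz1 (Finset.insert_subset hacx hFs))
    rw [Finset.card_insert_of_notMem hz2, Finset.card_insert_of_notMem hane, hFcard] at m3
    omega

theorem sum_cs_split {W : Finset V} {v : V} (f : Finset V → ℤ) :
    ∑ U ∈ cs G W, f U = ∑ U ∈ cx G W {v}, f U +
      ∑ C ∈ W.powerset.filter (fun C => Br G W v C), ∑ U ∈ cs G C, f U := by
  rw [← Finset.sum_biUnion, ← Finset.sum_union]
  · congr 1
    ext U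
    simp only [Finset.mem_union, Finset.mem_biUnion, Finset.mem_filter, Finset.mem_powerset,
      mem_cs, mem_cx, Finset.singleton_subset_iff]
    constructor
    · rintro ⟨h1, h2⟩
      by_cases hv : v ∈ U
      · exact Or.inl ⟨h1, h2, hv⟩
      · obtain ⟨C, hC, hUC⟩ := br_exists h2 h1 hv
        exact Or.inr ⟨C, ⟨hC.1, hC⟩, hUC, h2⟩
    · rintro (⟨h1, h2, h3⟩ | ⟨C, ⟨h1, h2⟩, h3, h4⟩)
      · exact ⟨h1, h2⟩
      · exact ⟨h3.trans h1, h4⟩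
  · rw [Finset.disjoint_left]
    intro U h1 h2
    simp only [Finset.mem_biUnion, Finset.mem_filter, mem_cs] at h2
    obtain ⟨C, ⟨_, hC⟩, hUC, _⟩ := h2
    exact hC.2.1 (hUC ((mem_cx.1 h1).2.2 (by simp)))
  · intro C hC C' hC' hne
    rw [Function.onFun, Finset.disjoint_left]
    intro U h1 h2
    simp only [Finset.coe_filter, Set.mem_ofPred_eq] at hC hC'
    obtain ⟨u, hu⟩ := (mem_cs.1 h1).2.1
    have hu1 := (mem_cs.1 h1).1 hu
    have hu2 := (mem_cs.1 h2).1 hu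
    apply hne
    apply Finset.Subset.antisymm
    · exact br_sub hC'.2 hC.2.2.2.1 hC.2.1 hC.2.2.1 hu1 hu2
    · exact br_sub hC.2 hC'.2.2.2.1 hC'.2.1 hC'.2.2.1 hu2 hu1

theorem sum_br_card {W : Finset V} {v : V} (hv : v ∈ W) :
    ∑ C ∈ W.powerset.filter (fun C => Br G W v C), C.card + 1 = W.card := by
  rw [← Finset.card_erase_add_one hv]
  congr 1
  have := Finset.card_biUnion (s := W.powerset.filter (fun C => Br G W v C)) (t := id) (by
    intro C hC C' hC' hne
    rw [Function.onFun, Finset.disjoint_left]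
    intro u h1 h2
    simp only [Finset.coe_filter, Set.mem_ofPred_eq] at hC hC'
    apply hne
    apply Finset.Subset.antisymm
    · exact br_sub hC'.2 hC.2.2.2.1 hC.2.1 hC.2.2.1 h1 h2
    · exact br_sub hC.2 hC'.2.2.2.1 hC'.2.1 hC'.2.2.1 h2 h1)
  simp only [id] at this
  rw [← this]
  congr 1
  ext u
  simp only [Finset.mem_biUnion, Finset.mem_filter, Finset.mem_erase, id]
  constructor
  · rintro ⟨C, ⟨_, hC⟩, hu⟩
    exact ⟨fun h => hC.2.1 (h ▸ hu), hC.1 hu⟩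
  · rintro ⟨h1, h2⟩
    obtain ⟨C, hC, huC⟩ := br_exists (W := W) (v := v) (con_single (G := G) u) (by simpa using h2)
      (by simpa using Ne.symm h1)
    exact ⟨C, ⟨Finset.mem_powerset.2 hC.1, hC⟩, huC (by simp)⟩

theorem main (k : ℕ) : ∀ W : Finset V, W.card ≤ k → Con G W →
    0 ≤ ∑ U ∈ cs G W, (3 * (U.card : ℤ) - W.card - 2) ∧
    (∑ U ∈ cs G W, (3 * (U.card : ℤ) - W.card - 2) = 0 → ∃ e, PathEnd G W e) := by
  induction k with
  | zero =>
    intro W hk hW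
    have : W = ∅ := by simpa using hk
    exact absurd this hW.1.ne_empty
  | succ k ih =>
    intro W hk hW
    obtain ⟨v, hv, hgood⟩ := good_vertex hW
    set B := W.powerset.filter (fun C => Br G W v C) with hB
    have hBmem : ∀ C ∈ B, Br G W v C := fun C hC => (Finset.mem_filter.1 hC).2
    have hcl : ∀ C ∈ B, C.card < W.card := fun C hC => Finset.card_lt_card
      ⟨(hBmem C hC).1, fun h => (hBmem C hC).2.1 (h hv)⟩
    have hIH : ∀ C ∈ B, _ := fun C hC => ih C (by have := hcl C hC; omega) (hBmem C hC).2.2.1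
    have hL := local_mean (G := G) W.card W {v} hW (con_single v) (by simpa using hv) (by omega)
    set L := ∑ U ∈ cx G W {v}, (2 * (U.card : ℤ) - W.card - (({v} : Finset V).card : ℤ)) with hLdef
    set R := (cx G W {v}).card with hR
    have hsum : (∑ C ∈ B, (C.card : ℤ)) = W.card - 1 := by
      have := sum_br_card (G := G) hv
      rw [← hB] at this
      rw [← this]; push_cast; ring
    have hfirst : 2 * ∑ U ∈ cx G W {v}, (3 * (U.card : ℤ) - W.card - 2) =
        3 * L + ∑ C ∈ B, (C.card : ℤ) * R := by
      rw [← Finset.sum_mul, hsum, hLdef, hR, Finset.card_eq_sum_ones (cx G W {v}), Nat.cast_sum,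
        Finset.mul_sum, Finset.mul_sum, Finset.mul_sum, ← Finset.sum_add_distrib]
      apply Finset.sum_congr rfl
      intro U _
      simp
      ring
    have hsecond : ∀ C ∈ B, ∑ U ∈ cs G C, (3 * (U.card : ℤ) - W.card - 2) =
        ∑ U ∈ cs G C, (3 * (U.card : ℤ) - C.card - 2) - (W \ C).card * (cs G C).card := by
      intro C hC
      have n5 : ((W \ C).card : ℤ) = W.card - C.card := by
        rw [Finset.card_sdiff_of_subset (hBmem C hC).1]; push_cast [(hcl C hC).le]; rfl
      rw [n5, Finset.card_eq_sum_ones (cs G C), Nat.cast_sum, Finset.mul_sum,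
        ← Finset.sum_sub_distrib]
      apply Finset.sum_congr rfl
      intro U _
      push_cast
      ring
    have htot : 2 * ∑ U ∈ cs G W, (3 * (U.card : ℤ) - W.card - 2) = 3 * L + ∑ C ∈ B,
        (2 * ∑ U ∈ cs G C, (3 * (U.card : ℤ) - C.card - 2) +
          ((C.card : ℤ) * R - 2 * (W \ C).card * (cs G C).card)) := by
      rw [sum_cs_split (v := v), mul_add, hfirst, ← hB, Finset.sum_congr rfl hsecond,
        Finset.mul_sum B _ (2 : ℤ), add_assoc, ← Finset.sum_add_distrib]
      congr 1
      apply Finset.sum_congr rfl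
      intro C _
      ring
    have hnn : ∀ C ∈ B, 0 ≤ (C.card : ℤ) * R - 2 * (W \ C).card * (cs G C).card := by
      intro C hC
      have := hgood C (hBmem C hC)
      have : (2 * (W \ C).card * (cs G C).card : ℤ) ≤ C.card * R := by exact_mod_cast this
      linarith
    have hterm : ∀ C ∈ B, 0 ≤ (2 * ∑ U ∈ cs G C, (3 * (U.card : ℤ) - C.card - 2) +
          ((C.card : ℤ) * R - 2 * (W \ C).card * (cs G C).card)) := by
      intro C hC
      have := hnn C hC
      have := (hIH C hC).1
      linarith
    have hs := Finset.sum_nonneg hterm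
    refine ⟨by linarith, ?_⟩
    intro h0
    by_cases hWv : W = {v}
    · exact ⟨v, hWv ▸ PathEnd.single v⟩
    obtain ⟨w, hw, hwv⟩ : ∃ w ∈ W, w ≠ v := by
      by_contra hn
      push Not at hn
      apply hWv
      ext y
      simp
      exact ⟨hn y, fun h => h ▸ hv⟩
    obtain ⟨C, hC, -⟩ := br_exists (W := W) (v := v) (con_single (G := G) w) (by simpa using hw)
      (by simpa using Ne.symm hwv)
    have hCB : C ∈ B := Finset.mem_filter.2 ⟨Finset.mem_powerset.2 hC.1, hC⟩
    have hz : ∑ C ∈ B,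
        (2 * ∑ U ∈ cs G C, (3 * (U.card : ℤ) - C.card - 2) +
          ((C.card : ℤ) * R - 2 * (W \ C).card * (cs G C).card)) = 0 := by linarith
    have hz' := (Finset.sum_eq_zero_iff_of_nonneg hterm).1 hz C hCB
    have z1 := hnn C hCB
    have z2 := (hIH C hCB).1
    obtain ⟨e, he⟩ := (hIH C hCB).2 (by linarith)
    have z3 : (C.card : ℤ) * R = 2 * (W \ C).card * (cs G C).card := by linarith
    have z4 : C.card * R = 2 * (W \ C).card * (cs G C).card := by exact_mod_cast z3
    have z5 := (pe_cs he).1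
    have z6 : 0 < C.card := Finset.card_pos.2 hC.2.2.1.1
    have z7 : R = (W \ C).card * (C.card + 1) := by
      apply Nat.eq_of_mul_eq_mul_left z6
      rw [z4]
      calc _ = (W \ C).card * (2 * (cs G C).card) := by ring
        _ = _ := by rw [z5]; ring
    have hvA : v ∈ W \ C := by simp [hv, hC.2.1]
    have n0 : 0 < (W \ C).card := Finset.card_pos.2 ⟨v, hvA⟩
    have n1 := card_le_cx (br_sdiff hW hv hC) (x := v) hvA
    have n2 := card_le_cx (br_insert hW hv hC) (x := v) (by simp)
    have n3 := cx_prod (G := G) (W := W) (A := W \ C) (B := insert v C) (H := {v})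
      (K := {v}) (v := v) Finset.sdiff_subset (Finset.insert_subset hv hC.1) (by
        ext y; simp; grind [hC.2.1]) (by simp) subset_rfl
    have n4 : (insert v C).card = C.card + 1 := Finset.card_insert_of_notMem hC.2.1
    rw [← hR, z7] at n3
    have p1 := pe_of_card (G := G) (W \ C).card (W \ C) v le_rfl (br_sdiff hW hv hC) hvA (by
      by_contra hlt
      push Not at hlt
      rw [n4] at n2
      nlinarith)
    have p2 := pe_of_card (G := G) (insert v C).card (insert v C) v le_rfl (br_insert hW hv hC)
      (by simp) (by
      by_contra hlt
      push Not at hlt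
      rw [n4] at n2 hlt
      nlinarith)
    obtain ⟨e', he'⟩ := pe_join p1 (insert v C) p2 (by
      intro z hz hz'
      simp at hz hz'
      tauto) (by
      intro a ha b hb hab
      simp at ha hb
      rcases hb with hb | hb
      · exact Or.inr hb
      · rcases hC.2.2.2 b hb a ha.1 hab.symm with h | h
        · exact absurd h ha.2
        · exact Or.inl h)
    refine ⟨e', ?_⟩
    convert he' using 1
    ext y
    have := @hC.1 y
    simp
    grind

theorem con_iff {U : Finset V} :
    (U.Nonempty ∧ (G.induce (U : Set V)).Connected) ↔ Con G U := by
  constructor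
  · rintro ⟨hne, hc⟩
    refine ⟨hne, ?_⟩
    intro T hT ⟨t, ht⟩ hTU
    obtain ⟨u, hu, huT⟩ : ∃ u ∈ U, u ∉ T := by
      by_contra hn
      push Not at hn
      exact hTU (Finset.Subset.antisymm hT hn)
    obtain ⟨p⟩ := hc.preconnected ⟨t, hT ht⟩ ⟨u, hu⟩
    obtain ⟨d, _, h1, h2⟩ := p.exists_boundary_dart {y | (y : V) ∈ T} ht huT
    exact ⟨d.fst, h1, d.snd, d.snd.2, h2, d.adj⟩
  · intro hU
    refine ⟨hU.1, ?_⟩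
    obtain ⟨u, hu⟩ := hU.1
    rw [SimpleGraph.connected_iff_exists_forall_reachable]
    refine ⟨⟨u, hu⟩, ?_⟩
    by_contra hn
    push Not at hn
    obtain ⟨y, hy⟩ := hn
    obtain ⟨a, ha, b, hb, hbT, hab⟩ := hU.2
      (U.filter (fun z => ∃ hz : z ∈ U, (G.induce (U : Set V)).Reachable ⟨u, hu⟩ ⟨z, hz⟩))
      (Finset.filter_subset _ _) ⟨u, by
        rw [Finset.mem_filter]; exact ⟨hu, hu, SimpleGraph.Reachable.refl _⟩⟩ (by
        intro h
        have h3 := (Finset.ext_iff.1 h (y : V)).2 y.2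
        obtain ⟨_, _, h2⟩ := Finset.mem_filter.1 h3
        exact hy h2)
    obtain ⟨haU, _, har⟩ := Finset.mem_filter.1 ha
    apply hbT
    rw [Finset.mem_filter]
    refine ⟨hb, hb, har.trans ?_⟩
    apply SimpleGraph.Adj.reachable
    exact hab

theorem pe_fun {W : Finset V} {x : V} (h : PathEnd G W x) :
    ∃ f : ℕ → V, f 0 = x ∧ (∀ i < W.card, f i ∈ W) ∧
      (∀ i < W.card, ∀ j < W.card, f i = f j → i = j) ∧
      (∀ i < W.card, ∀ j < W.card, G.Adj (f i) (f j) ↔ (i + 1 = j ∨ j + 1 = i)) := by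
  induction h with
  | single x =>
    refine ⟨fun _ => x, rfl, by simp, ?_, ?_⟩
    · intro i hi j hj _
      simp at hi hj
      omega
    · intro i hi j hj
      simp at hi hj ⊢
      omega
  | @cons W x y h hy hxy hu ih =>
    obtain ⟨f, h0, h1, h2, h3⟩ := ih
    rw [Finset.card_insert_of_notMem hy]
    refine ⟨fun i => Nat.casesOn i y f, rfl, ?_, ?_, ?_⟩
    · rintro (_ | i) hi
      · simp
      · simp [h1 i (by omega)]
    · rintro (_ | i) hi (_ | j) hj he
      · rfl
      · simp at he
        exact absurd (he ▸ h1 j (by omega)) hy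
      · simp at he
        exact absurd (he ▸ h1 i (by omega)) hy
      · simp at he
        have := h2 i (by omega) j (by omega) he
        omega
    · have hW : 0 < W.card := Finset.card_pos.2 ⟨x, pe_mem h⟩
      have key : ∀ j < W.card, G.Adj y (f j) ↔ j = 0 := by
        intro j hj
        constructor
        · intro ha
          have := hu _ (h1 j hj) ha
          exact h2 j hj 0 hW (this.trans h0.symm)
        · rintro rfl
          rw [h0]; exact hxy.symm
      rintro (_ | i) hi (_ | j) hj
      · simp
      · simp
        rw [key j (by omega)]
      · simp
        rw [G.adj_comm, key i (by omega)]
      · simp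
        exact h3 i (by omega) j (by omega)

theorem pe_iso [Fintype V] {x : V} (h : PathEnd G Finset.univ x) :
    Nonempty (G ≃g SimpleGraph.pathGraph (Fintype.card V)) := by
  obtain ⟨f, h0, h1, h2, h3⟩ := pe_fun h
  rw [Finset.card_univ] at *
  have hinj : Function.Injective (fun i : Fin (Fintype.card V) => f i) := by
    intro i j he
    exact Fin.ext (h2 i i.2 j j.2 he)
  have hbij : Function.Bijective (fun i : Fin (Fintype.card V) => f i) :=
    (Fintype.bijective_iff_injective_and_card _).2 ⟨hinj, by simp⟩
  refine ⟨(SimpleGraph.Iso.symm ⟨Equiv.ofBijective _ hbij, ?_⟩)⟩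
  intro i j
  simp only [Equiv.ofBijective_apply]
  rw [h3 i i.2 j j.2, SimpleGraph.pathGraph_adj]

theorem iso_pe [Fintype V] (hne : 0 < Fintype.card V)
    (e : G ≃g SimpleGraph.pathGraph (Fintype.card V)) : ∃ x, PathEnd G Finset.univ x := by
  have key : ∀ k (hk : k < Fintype.card V),
      PathEnd G (Finset.univ.filter (fun y => (e y : ℕ) ≤ k)) (e.symm ⟨k, hk⟩) := by
    intro k
    induction k with
    | zero =>
      intro hk
      have : (Finset.univ.filter (fun y => (e y : ℕ) ≤ 0)) = {e.symm ⟨0, hk⟩} := by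
        ext y
        simp only [Finset.mem_filter, Finset.mem_univ, true_and, Finset.mem_singleton]
        rw [← e.injective.eq_iff, e.apply_symm_apply, Fin.ext_iff]
        simp
      rw [this]
      exact PathEnd.single _
    | succ k ih =>
      intro hk
      have ih := ih (by omega)
      have : (Finset.univ.filter (fun y => (e y : ℕ) ≤ k + 1)) =
          insert (e.symm ⟨k + 1, hk⟩) (Finset.univ.filter (fun y => (e y : ℕ) ≤ k)) := by
        ext y
        simp only [Finset.mem_filter, Finset.mem_univ, true_and, Finset.mem_insert]
        rw [← e.injective.eq_iff, e.apply_symm_apply, Fin.ext_iff]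
        simp
        omega
      rw [this]
      refine PathEnd.cons ih ?_ ?_ ?_
      · simp
      · rw [← e.map_adj_iff, SimpleGraph.pathGraph_adj]
        simp
      · intro z hz hadj
        rw [← e.map_adj_iff, SimpleGraph.pathGraph_adj] at hadj
        rw [← e.injective.eq_iff, e.apply_symm_apply, Fin.ext_iff]
        simp at hz hadj ⊢
        omega
  refine ⟨e.symm ⟨Fintype.card V - 1, by omega⟩, ?_⟩
  have := key (Fintype.card V - 1) (by omega)
  convert this using 1
  ext y
  have := (e y).2
  simp
  omega

end

end PathMin

theorem stmt_6 {V : Type*} [Fintype V] (G : SimpleGraph V) (hG : G.Connected) :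
    ((∑ U ∈ connSets G, (U.card : ℝ)) / (connSets G).card ≥ (Fintype.card V + 2) / 3) ∧
    ((∑ U ∈ connSets G, (U.card : ℝ)) / (connSets G).card = (Fintype.card V + 2) / 3 ↔
      Nonempty (G ≃g SimpleGraph.pathGraph (Fintype.card V))) := by
  have hcs : connSets G = PathMin.cs G Finset.univ := by
    ext U
    rw [PathMin.mem_cs, ← PathMin.con_iff]
    simp [connSets]
  have hV : Nonempty V := hG.nonempty
  have hcon : PathMin.Con G Finset.univ := by
    refine ⟨Finset.univ_nonempty, ?_⟩
    intro T _ ⟨t, ht⟩ hTU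
    obtain ⟨u, huT⟩ : ∃ u, u ∉ T := by
      by_contra hn
      push Not at hn
      exact hTU (Finset.eq_univ_iff_forall.2 hn)
    obtain ⟨p⟩ := hG.preconnected t u
    obtain ⟨d, _, h1, h2⟩ := p.exists_boundary_dart {y | y ∈ T} ht huT
    exact ⟨d.fst, h1, d.snd, by simp, h2, d.adj⟩
  rw [hcs]
  obtain ⟨m1, m2⟩ := PathMin.main (G := G) _ Finset.univ le_rfl hcon
  have hpos : 0 < (PathMin.cs G Finset.univ).card :=
    Finset.card_pos.2 ⟨Finset.univ, PathMin.mem_cs.2 ⟨subset_rfl, hcon⟩⟩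
  have hposR : (0 : ℝ) < (PathMin.cs G Finset.univ).card := by exact_mod_cast hpos
  have hsum : ∑ U ∈ PathMin.cs G Finset.univ,
      (3 * (U.card : ℤ) - (Finset.univ : Finset V).card - 2) =
      3 * ∑ U ∈ PathMin.cs G Finset.univ, (U.card : ℤ) -
        (Fintype.card V + 2) * (PathMin.cs G Finset.univ).card := by
    rw [Finset.card_eq_sum_ones (PathMin.cs G Finset.univ), Nat.cast_sum, Finset.mul_sum,
      Finset.mul_sum, ← Finset.sum_sub_distrib]
    apply Finset.sum_congr rfl
    intro U _
    rw [Finset.card_univ]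
    push_cast
    ring
  rw [hsum] at m1 m2
  generalize hS : ∑ U ∈ PathMin.cs G Finset.univ, (U.card : ℤ) = S at *
  have hSR : ∑ U ∈ PathMin.cs G Finset.univ, (U.card : ℝ) = (S : ℝ) := by
    rw [← hS]; push_cast; rfl
  rw [hSR]
  have m1R : (0 : ℝ) ≤ 3 * S - (Fintype.card V + 2) * (PathMin.cs G Finset.univ).card := by
    exact_mod_cast m1
  constructor
  · rw [ge_iff_le, div_le_div_iff₀ (by norm_num) hposR]
    linarith
  · rw [div_eq_div_iff hposR.ne' (by norm_num)]
    constructor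
    · intro h
      have h' : S * 3 = (Fintype.card V + 2) * (PathMin.cs G Finset.univ).card := by
        exact_mod_cast h
      obtain ⟨e, he⟩ := m2 (by linarith)
      exact PathMin.pe_iso he
    · rintro ⟨e⟩
      obtain ⟨x, hx⟩ := PathMin.iso_pe Fintype.card_pos e
      obtain ⟨c1, c2⟩ := PathMin.pe_cs hx
      rw [Finset.card_univ] at c1 c2
      have c3 : (6 : ℤ) * S = 2 * (PathMin.cs G Finset.univ).card * (Fintype.card V + 2) := by
        rw [← hS]
        have : 6 * ∑ U ∈ PathMin.cs G Finset.univ, U.card =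
          2 * (PathMin.cs G Finset.univ).card * (Fintype.card V + 2) := by rw [c1, c2]
        exact_mod_cast this
      have c4 : (6 : ℝ) * S = 2 * (PathMin.cs G Finset.univ).card * (Fintype.card V + 2) := by
        exact_mod_cast c3
      linarith
end

section
/- If G is a k-connected graph of order n, then the density D(G) = A(G)/n of connected vertex sets satisfies D(G) ≥ (1/2)·(1 − 1/(2^k + 1)). -/
open Finset Filter

attribute [local instance] Classical.propDecidable

namespace CS

/-- `U` induces a connected (nonempty) subgraph. -/
def Cn {V : Type*} (G : SimpleGraph V) (U : Finset V) : Prop :=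
  (G.induce (U : Set V)).Connected

/-- Connected sets inside `H`. -/
noncomputable def cs {V : Type*} (G : SimpleGraph V) (H : Finset V) : Finset (Finset V) :=
  H.powerset.filter fun U => Cn G U

variable {V : Type*} {G : SimpleGraph V}

lemma mem_cs {H U : Finset V} : U ∈ cs G H ↔ U ⊆ H ∧ Cn G U := by
  simp [cs]

lemma Cn.ne {U : Finset V} (h : Cn G U) : U.Nonempty := by
  obtain ⟨x⟩ := SimpleGraph.Connected.nonempty h
  exact ⟨x.1, x.2⟩

lemma cn_singleton (v : V) : Cn G {v} := by
  unfold Cn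
  rw [Finset.coe_singleton, SimpleGraph.induce_singleton_eq_top]
  exact SimpleGraph.connected_top

lemma Cn.union {U W : Finset V} (hU : Cn G U) (hW : Cn G W) {x : V} (hx : x ∈ U)
    (hx' : x ∈ W) : Cn G (U ∪ W) := by
  unfold Cn
  rw [Finset.coe_union]
  exact SimpleGraph.induce_union_connected hU.preconnected hW.preconnected ⟨x, hx, hx'⟩

lemma cn_pair {a b : V} (hab : G.Adj a b) : Cn G {a, b} := by
  unfold Cn
  rw [Finset.coe_pair]
  exact SimpleGraph.induce_pair_connected_of_adj hab

lemma Cn.ins {U : Finset V} (hU : Cn G U) {a b : V} (ha : a ∈ U) (hab : G.Adj a b) :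
    Cn G (insert b U) := by
  have h := hU.union (cn_pair hab) ha (by simp)
  have e : U ∪ {a, b} = Insert.insert b U := by
    ext z; simp only [Finset.mem_union, Finset.mem_insert, Finset.mem_singleton]; grind
  rwa [e] at h

lemma Cn.union_adj {U W : Finset V} (hU : Cn G U) (hW : Cn G W) {a b : V} (ha : a ∈ U)
    (hb : b ∈ W) (hab : G.Adj a b) : Cn G (U ∪ W) := by
  have h := (hU.ins ha hab).union hW (Finset.mem_insert_self b U) hb
  have e : Insert.insert b U ∪ W = U ∪ W := by
    ext z; simp only [Finset.mem_union, Finset.mem_insert]; grind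
  rwa [e] at h

lemma Cn.cut {H A : Finset V} (hH : Cn G H) (hA : A ⊆ H) (hne : A.Nonempty) (hAH : A ≠ H) :
    ∃ a ∈ A, ∃ b ∈ H, b ∉ A ∧ G.Adj a b := by
  obtain ⟨a, ha⟩ := hne
  obtain ⟨b, hb, hbA⟩ : ∃ b ∈ H, b ∉ A := by
    by_contra hcon
    push Not at hcon
    exact hAH (Finset.Subset.antisymm hA hcon)
  obtain ⟨p⟩ := hH.preconnected ⟨a, hA ha⟩ ⟨b, hb⟩
  obtain ⟨d, -, h1, h2⟩ := p.exists_boundary_dart {z | z.1 ∈ A} ha hbA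
  exact ⟨d.fst.1, h1, d.snd.1, d.snd.2, h2, d.adj⟩

/-- maximal connected subset -/
lemma exists_max {K R : Finset V} (hR : Cn G R) (hRK : R ⊆ K) :
    ∃ Y, R ⊆ Y ∧ Y ⊆ K ∧ Cn G Y ∧ ∀ a ∈ Y, ∀ b ∈ K, G.Adj a b → b ∈ Y := by
  obtain ⟨Y, hY, hmax⟩ := ((cs G K).filter (fun Y => R ⊆ Y)).exists_max_image
    (fun Y => Y.card) ⟨R, by simp [mem_cs, hR, hRK]⟩
  simp only [Finset.mem_filter, mem_cs] at hY hmax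
  refine ⟨Y, hY.2, hY.1.1, hY.1.2, fun a ha b hb hab => ?_⟩
  by_contra hbY
  have := hmax (Insert.insert b Y)
    ⟨⟨Finset.insert_subset hb hY.1.1, hY.1.2.ins ha hab⟩,
      hY.2.trans (Finset.subset_insert _ _)⟩
  rw [Finset.card_insert_of_notMem hbY] at this
  omega

lemma cn_of_cut {K : Finset V} {x : V} (hx : x ∈ K)
    (h : ∀ A ⊆ K, x ∈ A → A ≠ K → ∃ a ∈ A, ∃ b ∈ K, b ∉ A ∧ G.Adj a b) : Cn G K := by
  obtain ⟨Y, h1, h2, h3, h4⟩ := exists_max (G := G) (cn_singleton x)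
    (Finset.singleton_subset_iff.2 hx)
  by_cases e : Y = K
  · rwa [← e]
  · obtain ⟨a, ha, b, hb, hbY, hab⟩ := h Y h2 (Finset.singleton_subset_iff.1 h1) e
    exact absurd (h4 a ha b hb hab) hbY

lemma exists_size {K : Finset V} (hK : Cn G K) {x : V} (hx : x ∈ K) (m : ℕ)
    (hm : m < K.card) : ∃ Y ⊆ K, x ∈ Y ∧ Cn G Y ∧ Y.card = m + 1 := by
  induction m with
  | zero => exact ⟨{x}, by simpa using hx, by simp, cn_singleton x, by simp⟩
  | succ m ih =>
    obtain ⟨Y, h1, h2, h3, h4⟩ := ih (by omega)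
    obtain ⟨a, ha, b, hb, hbY, hab⟩ := hK.cut h1 ⟨x, h2⟩ (by rintro rfl; omega)
    exact ⟨Insert.insert b Y, Finset.insert_subset hb h1, by simp [h2], h3.ins ha hab,
      by rw [Finset.card_insert_of_notMem hbY, h4]⟩

lemma exists_noncut {K : Finset V} (hK : Cn G K) {x : V} (hx : x ∈ K) (h2 : 2 ≤ K.card) :
    ∃ y ∈ K, y ≠ x ∧ Cn G (K.erase y) := by
  obtain ⟨Y, h1, hxY, h3, h4⟩ := exists_size hK hx (K.card - 2) (by omega)
  have hc : (K \ Y).card = 1 := by rw [Finset.card_sdiff_of_subset h1]; omega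
  obtain ⟨y, hy⟩ := Finset.card_eq_one.1 hc
  have hyK : y ∈ K \ Y := by rw [hy]; simp
  rw [Finset.mem_sdiff] at hyK
  refine ⟨y, hyK.1, fun e => hyK.2 (e ▸ hxY), ?_⟩
  have : K.erase y = Y := by
    ext z
    have : z ∈ K \ Y ↔ z = y := by rw [hy]; simp
    rw [Finset.mem_sdiff] at this
    rw [Finset.mem_erase]
    have := @h1 z
    grind
  rwa [this]

lemma card_le_rooted {K : Finset V} (hK : Cn G K) {x : V} (hx : x ∈ K) :
    K.card ≤ ((cs G K).filter (fun Y => x ∈ Y)).card := by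
  choose! f h1 h2 h3 h4 using fun m hm => exists_size hK hx m hm
  have := Finset.card_le_card_of_injOn (s := Finset.range K.card)
    (t := (cs G K).filter (fun Y => x ∈ Y)) f
    (fun m hm => by
      have hm : m < K.card := by simpa using hm
      simp [mem_cs, h1 m hm, h2 m hm, h3 m hm])
    (fun m hm l hl e => by
      have hm : m < K.card := by simpa using hm
      have hl : l < K.card := by simpa using hl
      have := h4 m hm; have := h4 l hl
      rw [e] at *; omega)
  simpa using this

lemma union_inj {H H' U Y U' Y' : Finset V} (a1 : U ⊆ H') (a2 : Y ⊆ H \ H') (a3 : U' ⊆ H')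
    (a4 : Y' ⊆ H \ H') (he : U ∪ Y = U' ∪ Y') : U = U' ∧ Y = Y' := by
  rw [Finset.ext_iff] at he
  simp only [Finset.subset_iff, Finset.mem_sdiff, Finset.mem_union] at a1 a2 a3 a4 he
  constructor
  · ext z; specialize he z; specialize @a1 z; specialize @a2 z; specialize @a3 z
    specialize @a4 z; tauto
  · ext z; specialize he z; specialize @a1 z; specialize @a2 z; specialize @a3 z
    specialize @a4 z; tauto

lemma arith1 (h t r A B Sa Sb : ℕ) (i1 : (h + t + 1 + (r + 1)) * A ≤ 2 * Sa)
    (i2 : (h + r) * B ≤ 2 * Sb) (c4 : B * (t + 1) ≤ A) :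
    (h + t + 1 + r) * (A + B) ≤ 2 * (Sa + Sb) := by
  nlinarith

/-- Local mean: connected sets containing `R` have average size at least `(|H|+|R|)/2`. -/
lemma local_mean (m : ℕ) : ∀ {H R : Finset V}, Cn G H → Cn G R → R ⊆ H → H.card - R.card ≤ m →
    (H.card + R.card) * ((cs G H).filter (fun U => R ⊆ U)).card ≤
      2 * ∑ U ∈ (cs G H).filter (fun U => R ⊆ U), U.card := by
  induction m with
  | zero =>
    intro H R hH hR hRH hm
    have : R = H := Finset.eq_of_subset_of_card_le hRH (by omega)
    subst this
    have : (cs G R).filter (fun U => R ⊆ U) = {R} := by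
      ext U; simp only [Finset.mem_filter, mem_cs, Finset.mem_singleton]
      constructor
      · rintro ⟨⟨h1, -⟩, h2⟩; exact Finset.Subset.antisymm h1 h2
      · rintro rfl; simp [hR]
    rw [this]; simp; omega
  | succ m ih =>
    intro H R hH hR hRH hm
    by_cases e : R = H
    · exact ih hH hR hRH (by rw [e]; omega)
    obtain ⟨a, ha, x, hx, hxR, hax⟩ := hH.cut hRH hR.ne e
    have hcR : R.card < H.card := Finset.card_lt_card (hRH.ssubset_of_ne e)
    obtain ⟨H', h1, h2, h3, h4⟩ := exists_max (K := H.erase x) hR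
      (Finset.subset_erase.2 ⟨hRH, hxR⟩)
    have hxH' : x ∉ H' := fun h => (Finset.mem_erase.1 (h2 h)).1 rfl
    have hH'H : H' ⊆ H := h2.trans (Finset.erase_subset _ _)
    have hcH' : H'.card < H.card :=
      Finset.card_lt_card (hH'H.ssubset_of_ne (by rintro rfl; exact hxH' hx))
    have hRH'c := Finset.card_le_card h1
    -- split
    set F := (cs G H).filter (fun U => R ⊆ U) with hF
    have s1 : F.filter (fun U => x ∈ U) = (cs G H).filter (fun U => Insert.insert x R ⊆ U) := by
      ext U; simp only [hF, Finset.mem_filter, Finset.insert_subset_iff]; tauto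
    have s2 : F.filter (fun U => ¬ x ∈ U) = (cs G H').filter (fun U => R ⊆ U) := by
      ext U; simp only [hF, Finset.mem_filter, mem_cs]
      constructor
      · rintro ⟨⟨⟨k1, k2⟩, k3⟩, k4⟩
        refine ⟨⟨?_, k2⟩, k3⟩
        by_contra hcon
        have hne : H' ∩ U ≠ U := fun h => hcon (by rw [← h]; exact Finset.inter_subset_left)
        obtain ⟨c, hc, d, hd, hd', hcd⟩ := k2.cut Finset.inter_subset_right
          ⟨a, Finset.mem_inter.2 ⟨h1 ha, k3 ha⟩⟩ hne
        have := h4 c (Finset.mem_inter.1 hc).1 d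
          (Finset.mem_erase.2 ⟨fun h => k4 (h ▸ hd), k1 hd⟩) hcd
        exact hd' (Finset.mem_inter.2 ⟨this, hd⟩)
      · rintro ⟨⟨k1, k2⟩, k3⟩
        exact ⟨⟨⟨k1.trans hH'H, k2⟩, k3⟩, fun h => hxH' (k1 h)⟩
    have i1 := ih hH (hR.ins ha hax) (Finset.insert_subset hx hRH)
      (by rw [Finset.card_insert_of_notMem hxR]; omega)
    have i2 := ih h3 hR h1 (by omega)
    rw [← s1, Finset.card_insert_of_notMem hxR] at i1
    rw [← s2] at i2
    have c1 := Finset.card_filter_add_card_filter_not (s := F) (fun U => x ∈ U)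
    have c2 := Finset.sum_filter_add_sum_filter_not F (fun U => x ∈ U) (fun U => U.card)
    -- the complement is connected
    have hK : Cn G (H \ H') := by
      refine cn_of_cut (x := x) (by simp [hx, hxH']) ?_
      intro A hA hxA hAne
      obtain ⟨c, hc, d, hd, hd', hcd⟩ := hH.cut (A := H' ∪ A)
        (Finset.union_subset hH'H (hA.trans Finset.sdiff_subset)) ⟨x, by simp [hxA]⟩ (by
          intro h
          apply hAne
          refine Finset.Subset.antisymm hA ?_
          rw [← h]
          intro z hz
          simp only [Finset.mem_sdiff, Finset.mem_union] at hz
          tauto)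
      simp only [Finset.mem_union, not_or] at hc hd'
      refine ⟨c, ?_, d, by simp [hd, hd'.1], hd'.2, hcd⟩
      rcases hc with hc | hc
      · exact absurd (h4 c hc d (Finset.mem_erase.2 ⟨fun h => hd'.2 (h ▸ hxA), hd⟩) hcd) hd'.1
      · exact hc
    have hKc := card_le_rooted hK (x := x) (by simp [hx, hxH'])
    rw [Finset.card_sdiff_of_subset hH'H] at hKc
    have c3 : (F.filter (fun U => ¬ x ∈ U)).card *
        ((cs G (H \ H')).filter (fun Y => x ∈ Y)).card ≤ (F.filter (fun U => x ∈ U)).card := by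
      rw [← Finset.card_product, s2]
      refine Finset.card_le_card_of_injOn (fun q => q.1 ∪ q.2) ?_ ?_
      · rintro ⟨U, Y⟩ hq
        simp only [Finset.coe_product, Set.mem_prod, Finset.mem_coe, Finset.mem_filter,
          mem_cs] at hq
        obtain ⟨⟨⟨q1, q2⟩, q3⟩, ⟨q4, q5⟩, q6⟩ := hq
        simp only [hF, Finset.coe_filter, Set.mem_ofPred_eq, Finset.mem_filter, mem_cs]
        exact ⟨⟨⟨Finset.union_subset (q1.trans hH'H) (q4.trans Finset.sdiff_subset),
          q2.union_adj q5 (q3 ha) q6 hax⟩, q3.trans Finset.subset_union_left⟩,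
          Finset.mem_union_right _ q6⟩
      · rintro ⟨U, Y⟩ hq ⟨U', Y'⟩ hq' he
        simp only [Finset.coe_product, Set.mem_prod, Finset.mem_coe, Finset.mem_filter,
          mem_cs] at hq hq' he
        have a1 := hq.1.1.1
        have a2 := hq.2.1.1
        have a3 := hq'.1.1.1
        have a4 := hq'.2.1.1
        obtain ⟨e1, e2⟩ := union_inj a1 a2 a3 a4 he
        rw [e1, e2]
    have c4 : (F.filter (fun U => ¬ x ∈ U)).card * (H.card - H'.card) ≤
        (F.filter (fun U => x ∈ U)).card := (Nat.mul_le_mul_left _ hKc).trans c3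
    obtain ⟨t, ht⟩ := Nat.exists_eq_add_of_lt hcH'
    rw [ht] at c4 i1 ⊢
    have : H'.card + t + 1 - H'.card = t + 1 := by omega
    rw [this] at c4
    rw [← c1, ← c2]
    exact arith1 _ _ _ _ _ _ _ i1 i2 c4

lemma exists_path {H : Finset V} (hH : Cn G H) {v w : V} (hv : v ∈ H) (hw : w ∈ H) :
    ∃ (d : ℕ) (p : ℕ → V), p 0 = v ∧ p d = w ∧ (∀ i < d, G.Adj (p i) (p (i + 1))) ∧
      (∀ i, p i ∈ H) ∧ d + 1 ≤ H.card := by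
  obtain ⟨q, hq⟩ := (hH.preconnected ⟨v, hv⟩ ⟨w, hw⟩).exists_isPath
  refine ⟨q.length, fun i => (q.getVert i).1, by simp, by simp, ?_, ?_, ?_⟩
  · intro i hi
    exact q.adj_getVert_succ hi
  · intro i; exact (q.getVert i).2
  · have := hq.length_lt
    simpa using this

/-- number of connected sets within `H` satisfying `P` -/
noncomputable def ct (G : SimpleGraph V) (H : Finset V) (P : Finset V → Prop) : ℕ :=
  ((cs G H).filter P).card

lemma ct_eq (G : SimpleGraph V) (H : Finset V) (P : Finset V → Prop) [DecidablePred P] :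
    ct G H P = ((cs G H).filter P).card := by
  unfold ct; congr

lemma ext_bound {H : Finset V} (hH : Cn G H) {v w : V} (hv : v ∈ H) (hw : w ∈ H) :
    ct G H (fun U => v ∈ U ∧ w ∉ U) ≤ (H.card - 1) * ct G H (fun U => v ∈ U ∧ w ∈ U) := by
  obtain ⟨d, p, p0, pd, padj, pH, hd⟩ := exists_path hH hv hw
  have key : ct G H (fun U => v ∈ U ∧ w ∉ U) ≤ d * ct G H (fun U => v ∈ U ∧ w ∈ U) := by
    let T : ℕ → Finset V := fun i => (Finset.Ioc i d).image p
    have hT : ∀ i U, p i ∈ U → i ≤ d → Cn G U → Cn G (U ∪ T i) := by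
      intro i U hp hi hU
      have : ∀ j, i ≤ j → j ≤ d → Cn G (U ∪ (Finset.Ioc i j).image p) := by
        intro j hij
        induction j, hij using Nat.le_induction with
        | base => intro _; simpa using hU
        | succ j hij ih =>
          intro hj
          have h := ih (by omega)
          have e : (Finset.Ioc i (j+1)).image p =
              Insert.insert (p (j+1)) ((Finset.Ioc i j).image p) := by
            rw [← Finset.image_insert]
            congr 1
            ext z; simp only [Finset.mem_Ioc, Finset.mem_insert]; omega
          rw [e, Finset.union_insert]
          refine h.ins (a := p j) ?_ (padj j (by omega))
          rcases hij.eq_or_lt with rfl | hlt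
          · exact Finset.mem_union_left _ hp
          · exact Finset.mem_union_right _ (Finset.mem_image_of_mem _ (by simp; omega))
      exact this d hi le_rfl
    let B : ℕ → Finset (Finset V) := fun i =>
      (cs G H).filter (fun U => v ∈ U ∧ p i ∈ U ∧ Disjoint U (T i))
    have hsub : (cs G H).filter (fun U => v ∈ U ∧ w ∉ U) ⊆ (Finset.range d).biUnion B := by
      intro U hU
      simp only [Finset.mem_filter] at hU
      obtain ⟨hUc, hvU, hwU⟩ := hU
      obtain ⟨i, hi, hmax⟩ := ((Finset.range (d+1)).filter (fun i => p i ∈ U)).exists_max_image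
        id ⟨0, by simp [p0, hvU]⟩
      simp only [Finset.mem_filter, Finset.mem_range, id] at hi hmax
      have hid : i ≠ d := by rintro rfl; exact hwU (pd ▸ hi.2)
      simp only [Finset.mem_biUnion, Finset.mem_range, B, Finset.mem_filter]
      refine ⟨i, by omega, hUc, hvU, hi.2, ?_⟩
      rw [Finset.disjoint_left]
      intro z hz hzT
      simp only [T, Finset.mem_image, Finset.mem_Ioc] at hzT
      obtain ⟨l, hl, rfl⟩ := hzT
      have := hmax l ⟨by omega, hz⟩
      omega
    rw [ct_eq, ct_eq]
    refine (Finset.card_le_card hsub).trans ?_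
    calc _ ≤ ∑ i ∈ Finset.range d, (B i).card := Finset.card_biUnion_le
      _ ≤ ∑ i ∈ Finset.range d, ((cs G H).filter (fun U => v ∈ U ∧ w ∈ U)).card := by
        refine Finset.sum_le_sum fun i hi => ?_
        rw [Finset.mem_range] at hi
        refine Finset.card_le_card_of_injOn (fun U => U ∪ T i) ?_ ?_
        · intro U hU
          simp only [B, Finset.coe_filter, Set.mem_ofPred_eq, mem_cs] at hU ⊢
          obtain ⟨⟨u1, u2⟩, u3, u4, u5⟩ := hU
          refine ⟨⟨Finset.union_subset u1 ?_, hT i U u4 hi.le u2⟩, Finset.mem_union_left _ u3, ?_⟩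
          · intro z hz
            simp only [T, Finset.mem_image] at hz
            obtain ⟨l, -, rfl⟩ := hz
            exact pH l
          · refine Finset.mem_union_right _ ?_
            rw [← pd]
            exact Finset.mem_image_of_mem _ (by simp [hi])
        · intro U hU U' hU' he
          simp only [B, Finset.coe_filter, Set.mem_ofPred_eq] at hU hU' he
          have a1 := hU.2.2.2
          have a2 := hU'.2.2.2
          rw [Finset.disjoint_left] at a1 a2
          ext z
          rw [Finset.ext_iff] at he
          specialize he z
          specialize @a1 z
          specialize @a2 z
          simp only [Finset.mem_union] at he
          tauto
      _ = _ := by simp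
  exact key.trans (Nat.mul_le_mul_right _ (by omega))

noncomputable def n0 (G : SimpleGraph V) (H : Finset V) : ℕ := (cs G H).card

noncomputable def n1 (G : SimpleGraph V) (H : Finset V) (v : V) : ℕ :=
  ((cs G H).filter (fun U => v ∈ U)).card

noncomputable def n2 (G : SimpleGraph V) (H : Finset V) (v w : V) : ℕ :=
  ((cs G H).filter (fun U => v ∈ U ∧ w ∈ U)).card

lemma cs_erase (H : Finset V) (r : V) :
    (cs G H).filter (fun U => ¬ r ∈ U) = cs G (H.erase r) := by
  ext U
  simp only [Finset.mem_filter, mem_cs, Finset.subset_erase]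
  tauto

lemma n0_erase (H : Finset V) (r : V) : n0 G H = n1 G H r + n0 G (H.erase r) := by
  unfold n0 n1
  rw [← cs_erase, Finset.card_filter_add_card_filter_not]

lemma n1_erase (H : Finset V) (r y : V) :
    n1 G H y = n2 G H r y + n1 G (H.erase r) y := by
  unfold n1 n2
  rw [← cs_erase, ← Finset.card_filter_add_card_filter_not
    (s := (cs G H).filter (fun U => y ∈ U)) (fun U => r ∈ U)]
  congr 2
  · ext U; simp only [Finset.mem_filter]; tauto
  · ext U; simp only [Finset.mem_filter]; tauto

lemma n1_le {H : Finset V} (hH : Cn G H) {r y : V} (hr : r ∈ H) (hy : y ∈ H) :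
    n1 G H r ≤ H.card * n2 G H r y := by
  have h := ext_bound hH hr hy
  rw [ct_eq, ct_eq] at h
  have e : n1 G H r = n2 G H r y + ((cs G H).filter (fun U => r ∈ U ∧ y ∉ U)).card := by
    unfold n1 n2
    rw [← Finset.card_filter_add_card_filter_not
      (s := (cs G H).filter (fun U => r ∈ U)) (fun U => y ∈ U)]
    rw [Finset.filter_filter, Finset.filter_filter]
  have hp : 1 ≤ H.card := Finset.card_pos.2 ⟨r, hr⟩
  obtain ⟨c, hc⟩ := Nat.exists_eq_add_of_le hp
  rw [hc, Nat.add_sub_cancel_left] at h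
  rw [e, hc]
  unfold n2
  nlinarith

lemma pendant {H U : Finset V} {r y : V} (hyr : y ≠ r) (hadj : G.Adj r y)
    (hpen : ∀ z ∈ H, G.Adj r z → z = y) (hUH : U ⊆ H) (hrU : r ∈ U) (hne : U ≠ {r}) :
    Cn G U ↔ Cn G (U.erase r) ∧ y ∈ U := by
  constructor
  · intro hU
    have hyU : y ∈ U := by
      obtain ⟨a, ha, b, hb, -, hab⟩ := hU.cut (Finset.singleton_subset_iff.2 hrU)
        (Finset.singleton_nonempty r) hne.symm
      rw [Finset.mem_singleton] at ha
      subst ha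
      exact hpen b (hUH hb) hab ▸ hb
    refine ⟨cn_of_cut (x := y) (Finset.mem_erase.2 ⟨hyr, hyU⟩) ?_, hyU⟩
    intro A hA hyA hAne
    obtain ⟨c, hc, d, hd, hd', hcd⟩ := hU.cut (A := Insert.insert r A)
      (Finset.insert_subset hrU (hA.trans (Finset.erase_subset _ _)))
      (Finset.insert_nonempty _ _) (by
        intro h
        apply hAne
        rw [← h, Finset.erase_insert]
        intro hrA
        exact (Finset.mem_erase.1 (hA hrA)).1 rfl)
    rw [Finset.mem_insert, not_or] at hd'
    refine ⟨c, ?_, d, Finset.mem_erase.2 ⟨hd'.1, hd⟩, hd'.2, hcd⟩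
    rcases Finset.mem_insert.1 hc with rfl | hc
    · exact absurd (hpen d (hUH hd) hcd ▸ hyA) hd'.2
    · exact hc
  · rintro ⟨h1, h2⟩
    have := h1.ins (a := y) (b := r) (Finset.mem_erase.2 ⟨hyr, h2⟩) hadj.symm
    rwa [Finset.insert_erase hrU] at this

lemma ins_injOn (H : Finset V) (r : V) (P : Finset V → Prop) :
    Set.InjOn (fun U : Finset V => Insert.insert r U)
      ((((cs G (H.erase r)).filter P : Finset (Finset V))) : Set (Finset V)) := by
  intro U hU U' hU' he
  have a1 : r ∉ U := fun h =>
    (Finset.mem_erase.1 ((mem_cs.1 (Finset.mem_filter.1 hU).1).1 h)).1 rfl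
  have a2 : r ∉ U' := fun h =>
    (Finset.mem_erase.1 ((mem_cs.1 (Finset.mem_filter.1 hU').1).1 h)).1 rfl
  have := congrArg (fun W => Finset.erase W r) he
  simpa [Finset.erase_insert a1, Finset.erase_insert a2] using this

lemma pendant_n2 {H : Finset V} {r y z : V} (hr : r ∈ H) (hyr : y ≠ r)
    (hadj : G.Adj r y) (hpen : ∀ z ∈ H, G.Adj r z → z = y) (hz : z ≠ r) :
    n2 G H r z = n2 G (H.erase r) y z := by
  have e : (cs G H).filter (fun U => r ∈ U ∧ z ∈ U) =
      ((cs G (H.erase r)).filter (fun U => y ∈ U ∧ z ∈ U)).image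
        (fun U => Insert.insert r U) := by
    ext U
    simp only [Finset.mem_filter, Finset.mem_image, mem_cs]
    constructor
    · rintro ⟨⟨h1, h2⟩, h3, h4⟩
      have hne : U ≠ {r} := by rintro rfl; exact hz (Finset.mem_singleton.1 h4)
      obtain ⟨q1, q2⟩ := (pendant hyr hadj hpen h1 h3 hne).1 h2
      exact ⟨U.erase r, ⟨⟨Finset.erase_subset_erase _ h1, q1⟩, Finset.mem_erase.2 ⟨hyr, q2⟩,
        Finset.mem_erase.2 ⟨hz, h4⟩⟩, Finset.insert_erase h3⟩
    · rintro ⟨W, ⟨⟨h1, h2⟩, h3, h4⟩, rfl⟩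
      exact ⟨⟨Finset.insert_subset hr (h1.trans (Finset.erase_subset _ _)),
        h2.ins h3 hadj.symm⟩, Finset.mem_insert_self _ _, Finset.mem_insert_of_mem h4⟩
  unfold n2
  rw [e, Finset.card_image_of_injOn]
  convert ins_injOn (G := G) H r (fun U => y ∈ U ∧ z ∈ U)

lemma pendant_n1 {H : Finset V} {r y : V} (hr : r ∈ H) (hyr : y ≠ r)
    (hadj : G.Adj r y) (hpen : ∀ z ∈ H, G.Adj r z → z = y) :
    n1 G H r = 1 + n1 G (H.erase r) y := by
  have e : (cs G H).filter (fun U => r ∈ U) =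
      Insert.insert {r} (((cs G (H.erase r)).filter (fun U => y ∈ U)).image
        (fun U => Insert.insert r U)) := by
    ext U
    simp only [Finset.mem_filter, Finset.mem_image, mem_cs, Finset.mem_insert]
    constructor
    · rintro ⟨⟨h1, h2⟩, h3⟩
      by_cases hne : U = {r}
      · exact Or.inl hne
      right
      obtain ⟨q1, q2⟩ := (pendant hyr hadj hpen h1 h3 hne).1 h2
      exact ⟨U.erase r, ⟨⟨Finset.erase_subset_erase _ h1, q1⟩, Finset.mem_erase.2 ⟨hyr, q2⟩⟩,
        Finset.insert_erase h3⟩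
    · rintro (rfl | ⟨W, ⟨⟨h1, h2⟩, h3⟩, rfl⟩)
      · exact ⟨⟨Finset.singleton_subset_iff.2 hr, cn_singleton r⟩, Finset.mem_singleton_self r⟩
      · exact ⟨⟨Finset.insert_subset hr (h1.trans (Finset.erase_subset _ _)),
          h2.ins h3 hadj.symm⟩, Finset.mem_insert_self _ _⟩
  unfold n1
  rw [e, Finset.card_insert_of_notMem, Finset.card_image_of_injOn, add_comm]
  · convert ins_injOn (G := G) H r (fun U => y ∈ U)
  · simp only [Finset.mem_image, Finset.mem_filter, not_exists, not_and]
    rintro W ⟨-, h3⟩ he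
    have : y ∈ ({r} : Finset V) := by rw [← he]; exact Finset.mem_insert_of_mem h3
    exact hyr (Finset.mem_singleton.1 this)

/-- The auxiliary statement with a virtual pendant path of length `j` attached at `r`. -/
def TT (G : SimpleGraph V) (m : ℕ) : Prop :=
  ∀ (H : Finset V) (r : V) (j : ℕ), H.card ≤ m → Cn G H → r ∈ H → 2 ≤ H.card →
    Cn G (H.erase r) →
    (∀ y ∈ H, y ≠ r → Cn G (H.erase y) → n1 G H r + j ≤ n1 G H y + j * n2 G H r y) →
    ∃ y ∈ H, y ≠ r ∧ Cn G (H.erase y) ∧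
      2 * n0 G H + 2 * j * n1 G H r + j * (j + 1) ≤
        (H.card + j + 1) * (n1 G H y + j * n2 G H r y)

lemma n0_empty : n0 G (∅ : Finset V) = 0 := by
  unfold n0
  rw [Finset.card_eq_zero, Finset.eq_empty_iff_forall_notMem]
  intro U hU
  obtain ⟨h1, h2⟩ := mem_cs.1 hU
  obtain ⟨x, hx⟩ := h2.ne
  exact absurd (h1 hx) (Finset.notMem_empty x)

lemma P1_of_TT {m : ℕ} (hT : TT G m) {H : Finset V} (hm : H.card ≤ m) (hH : Cn G H) :
    ∃ y ∈ H, (H.erase y = ∅ ∨ Cn G (H.erase y)) ∧ 2 * n0 G H ≤ (H.card + 1) * n1 G H y := by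
  obtain ⟨x, hx⟩ := hH.ne
  by_cases h2 : 2 ≤ H.card
  · obtain ⟨y0, hy0, -, hy0c⟩ := exists_noncut hH hx h2
    obtain ⟨r, hr, hmin⟩ := (H.filter (fun y => Cn G (H.erase y))).exists_min_image
      (fun y => n1 G H y) ⟨y0, Finset.mem_filter.2 ⟨hy0, hy0c⟩⟩
    rw [Finset.mem_filter] at hr
    obtain ⟨y, hy, -, hyc, h⟩ := hT H r 0 hm hH hr.1 h2 hr.2 (fun y hy _ hyc => by
      have := hmin y (Finset.mem_filter.2 ⟨hy, hyc⟩)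
      simpa using this)
    refine ⟨y, hy, Or.inr hyc, by simpa using h⟩
  · have h1 : H.card = 1 := by
      have := Finset.card_pos.2 ⟨x, hx⟩
      omega
    have he : H.erase x = ∅ := by
      rw [← Finset.card_eq_zero, Finset.card_erase_of_mem hx, h1]
    refine ⟨x, hx, Or.inl he, ?_⟩
    rw [n0_erase H x, he, n0_empty, h1]
    omega

lemma arith2 (M j a b c q : ℕ) (e : 2 * q ≤ M * c) (h1 : a + j ≤ b + c + j * b)
    (h2 : a ≤ M * b) :
    2 * (a + q) + 2 * j * a + j * (j + 1) ≤ (M + j + 1) * (b + c + j * b) := by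
  have h3 : 2 * a + j ≤ (M + j + 1) * b + c := by nlinarith
  have h4 := Nat.mul_le_mul_left (j + 1) h3
  nlinarith

lemma TT_all (m : ℕ) : TT G m := by
  induction m with
  | zero => intro H r j hm _ _ h2; omega
  | succ m ih =>
    intro H r j hm hH hr h2 hHr hmin
    have hce : (H.erase r).card = H.card - 1 := Finset.card_erase_of_mem hr
    obtain ⟨y, hy, hyc, hyg⟩ := P1_of_TT ih (H := H.erase r) (by omega) hHr
    rw [hce, Nat.sub_add_cancel (by omega)] at hyg
    obtain ⟨hyr, hyH⟩ := Finset.mem_erase.1 hy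
    by_cases hgood : Cn G (H.erase y)
    · refine ⟨y, hyH, hyr, hgood, ?_⟩
      have h1 := hmin y hyH hyr hgood
      have h3 := n1_le hH hr hyH
      rw [n1_erase H r y] at h1 ⊢
      rw [n0_erase H r]
      exact arith2 _ _ _ _ _ _ hyg h1 h3
    · -- `r` is pendant at `y`
      have hcomm : (H.erase r).erase y = (H.erase y).erase r := Finset.erase_right_comm
      have hry : r ∈ H.erase y := Finset.mem_erase.2 ⟨hyr.symm, hr⟩
      have hyc' : Cn G ((H.erase r).erase y) := by
        rcases hyc with h | h
        · exfalso
          apply hgood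
          rw [hcomm] at h
          have : H.erase y = {r} := by
            rw [← Finset.insert_erase hry, h]
            rfl
          rw [this]
          exact cn_singleton r
        · exact h
      have hpen : ∀ z ∈ H, G.Adj r z → z = y := by
        intro z hz hrz
        by_contra hzy
        apply hgood
        have := hyc'.ins (a := z) (b := r)
          (Finset.mem_erase.2 ⟨hzy, Finset.mem_erase.2 ⟨hrz.ne', hz⟩⟩) hrz.symm
        rwa [hcomm, Finset.insert_erase hry] at this
      have hadj : G.Adj r y := by
        obtain ⟨a, ha, b, hb, -, hab⟩ := hH.cut (Finset.singleton_subset_iff.2 hr)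
          (Finset.singleton_nonempty r) (by
            intro h; rw [← h] at h2; simp at h2)
        rw [Finset.mem_singleton] at ha
        subst ha
        exact hpen b hb hab ▸ hab
      have hp1 := pendant_n1 hr hyr hadj hpen
      have hnon : ∀ z ∈ H.erase r, z ≠ y → Cn G ((H.erase r).erase z) → Cn G (H.erase z) := by
        intro z hz hzy hc
        have := hc.ins (a := y) (b := r) (Finset.mem_erase.2 ⟨hzy.symm, hy⟩) hadj.symm
        rwa [Finset.erase_right_comm, Finset.insert_erase
          (Finset.mem_erase.2 ⟨(Finset.mem_erase.1 hz).1.symm, hr⟩)] at this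
      have hc2 : 2 ≤ (H.erase r).card := by
        obtain ⟨w, hw⟩ := hyc'.ne
        have h3 := Finset.card_pos.2 ⟨w, hw⟩
        rw [Finset.card_erase_of_mem hy] at h3
        omega
      obtain ⟨z, hz, hzy, hzc, hzg⟩ := ih (H.erase r) y (j + 1) (by omega) hHr hy hc2 hyc' (by
        intro z hz hzy hzc
        obtain ⟨hzr, hzH⟩ := Finset.mem_erase.1 hz
        have h1 := hmin z hzH hzr (hnon z hz hzy hzc)
        rw [n1_erase H r z, pendant_n2 hr hyr hadj hpen hzr, hp1] at h1
        nlinarith)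
      obtain ⟨hzr, hzH⟩ := Finset.mem_erase.1 hz
      refine ⟨z, hzH, hzr, hnon z hz hzy hzc, ?_⟩
      rw [n1_erase H r z, pendant_n2 hr hyr hadj hpen hzr, hp1, n0_erase H r, hp1]
      have : (H.erase r).card + (j + 1) + 1 = H.card + j + 1 := by omega
      rw [this] at hzg
      have e : n2 G (H.erase r) y z + n1 G (H.erase r) z + j * n2 G (H.erase r) y z =
        n1 G (H.erase r) z + (j + 1) * n2 G (H.erase r) y z := by ring
      rw [e]
      refine le_trans (le_of_eq ?_) hzg
      ring

/-- Total size of connected sets. -/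
noncomputable def sz (G : SimpleGraph V) (H : Finset V) : ℕ := ∑ U ∈ cs G H, U.card

lemma sz_ge {H : Finset V} (hH : Cn G H) {v : V} (hv : v ∈ H) :
    (H.card + 1) * n1 G H v + 2 * sz G (H.erase v) ≤ 2 * sz G H := by
  have h := local_mean (G := G) (H.card - ({v} : Finset V).card) hH (cn_singleton v)
    (Finset.singleton_subset_iff.2 hv) le_rfl
  simp only [Finset.singleton_subset_iff, Finset.card_singleton] at h
  have c2 := Finset.sum_filter_add_sum_filter_not (cs G H) (fun U => v ∈ U) (fun U => U.card)
  rw [cs_erase] at c2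
  unfold n1 sz
  rw [← c2]
  linarith

lemma sz_empty : sz G (∅ : Finset V) = 0 := by
  have := n0_empty (G := G)
  unfold n0 at this
  unfold sz
  rw [Finset.card_eq_zero.1 this]; simp

lemma base (m : ℕ) : ∀ {H : Finset V}, H.card ≤ m → Cn G H →
    (H.card + 2) * n0 G H ≤ 3 * sz G H := by
  induction m with
  | zero =>
    intro H hm hH
    have := Finset.card_pos.2 hH.ne
    omega
  | succ m ih =>
    intro H hm hH
    obtain ⟨y, hy, hyc, hyg⟩ := P1_of_TT (TT_all H.card) le_rfl hH
    have h1 := sz_ge hH hy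
    have hce := Finset.card_erase_add_one hy
    have h2 : (H.card + 1) * n0 G (H.erase y) ≤ 3 * sz G (H.erase y) := by
      rcases hyc with h | h
      · rw [h, n0_empty]; omega
      · have := ih (H := H.erase y) (by omega) h
        have e : (H.erase y).card + 2 = H.card + 1 := by omega
        rwa [e] at this
    have h3 := n0_erase (G := G) H y
    have : (H.card + 1) * n0 G H = (H.card + 1) * n1 G H y + (H.card + 1) * n0 G (H.erase y) := by
      rw [h3]; ring
    nlinarith

lemma sum_n1 (H : Finset V) : ∑ v ∈ H, n1 G H v = sz G H := by
  unfold n1 sz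
  simp only [Finset.card_filter]
  rw [Finset.sum_comm]
  refine Finset.sum_congr rfl fun U hU => ?_
  have hU := (mem_cs.1 hU).1
  rw [← Finset.card_filter, Finset.filter_mem_eq_inter, Finset.inter_eq_right.2 hU]

def KC (G : SimpleGraph V) (k : ℕ) (H : Finset V) : Prop :=
  k < H.card ∧ ∀ S : Finset V, S.card < k → Cn G (H \ S)

lemma KC.erase {k : ℕ} {H : Finset V} (h : KC G (k + 1) H) {v : V} (hv : v ∈ H) :
    KC G k (H.erase v) := by
  refine ⟨?_, fun S hS => ?_⟩
  · rw [Finset.card_erase_of_mem hv]; have := h.1; omega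
  · have := h.2 (Insert.insert v S) ((Finset.card_insert_le _ _).trans_lt (by omega))
    have e : H.erase v \ S = H \ Insert.insert v S := by
      ext z; simp only [Finset.mem_sdiff, Finset.mem_erase, Finset.mem_insert]; tauto
    rwa [e]

lemma main (k : ℕ) (hk : 1 ≤ k) : ∀ {H : Finset V}, KC G k H →
    H.card * 2 ^ k * n0 G H ≤ 2 * sz G H * (2 ^ k + 1) := by
  induction k, hk using Nat.le_induction with
  | base =>
    intro H hH
    have hc : Cn G H := by simpa using hH.2 ∅ (by simp)
    have := base H.card le_rfl hc
    nlinarith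
  | succ k hk ih =>
    intro H hH
    have hc : Cn G H := by simpa using hH.2 ∅ (by simp)
    have hn : 2 ≤ H.card := by have := hH.1; omega
    obtain ⟨n, hn'⟩ := Nat.exists_eq_add_of_le hn
    have key : ∀ v ∈ H, (2 ^ k + 1) * (H.card + 1) * n1 G H v + (H.card - 1) * 2 ^ k * n0 G H ≤
        2 * (2 ^ k + 1) * sz G H + (H.card - 1) * 2 ^ k * n1 G H v := by
      intro v hv
      have h1 := sz_ge hc hv
      have h2 := ih (hH.erase hv)
      rw [Finset.card_erase_of_mem hv] at h2
      have h3 := n0_erase (G := G) H v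
      have h4 := Nat.mul_le_mul_left (2 ^ k + 1) h1
      rw [h3]
      generalize (H.card - 1) * 2 ^ k = t at *
      nlinarith
    have hs := Finset.sum_le_sum key
    simp only [Finset.sum_add_distrib, ← Finset.mul_sum, sum_n1, Finset.sum_const,
      smul_eq_mul] at hs
    have e : H.card - 1 = n + 1 := by omega
    rw [e, hn'] at hs
    rw [hn', pow_succ]
    generalize (2 : ℕ) ^ k = p at *
    have h5 : (n + 1) * ((2 + n) * (p * 2) * n0 G H) ≤
        (n + 1) * (2 * sz G H * (p * 2 + 1)) := by nlinarith
    exact Nat.le_of_mul_le_mul_left h5 (by omega)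

end CS

theorem stmt_7 {V : Type*} [Fintype V] (G : SimpleGraph V) (k : ℕ) (hk : 1 ≤ k)
    (hG : KConnected k G) :
    (∑ U ∈ connSets G, (U.card : ℝ)) / ((Fintype.card V : ℝ) * (connSets G).card) ≥
      (1 / 2) * (1 - 1 / (2 ^ k + 1)) := by
  have hcs : connSets G = CS.cs G Finset.univ := by
    ext U
    simp only [connSets, Finset.mem_filter, CS.mem_cs, Finset.mem_univ, true_and,
      Finset.subset_univ]
    exact ⟨fun h => h.2, fun h => ⟨CS.Cn.ne h, h⟩⟩
  have hKC : CS.KC G k Finset.univ := by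
    refine ⟨by simpa using hG.1, fun S hS => ?_⟩
    have := hG.2 S hS
    unfold CS.Cn
    rw [← Finset.compl_eq_univ_sdiff]
    exact this
  have hm := CS.main k hk hKC
  have hc : CS.Cn G Finset.univ := by simpa using hKC.2 ∅ (by simp; omega)
  have hN : 0 < (CS.cs G Finset.univ).card :=
    Finset.card_pos.2 ⟨Finset.univ, CS.mem_cs.2 ⟨Finset.Subset.refl _, hc⟩⟩
  have hV : 0 < Fintype.card V := by have := hG.1; omega
  rw [hcs]
  unfold CS.n0 CS.sz at hm
  rw [Finset.card_univ] at hm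
  have hm' : (Fintype.card V : ℝ) * 2 ^ k * (CS.cs G Finset.univ).card ≤
      2 * (∑ U ∈ CS.cs G Finset.univ, (U.card : ℝ)) * (2 ^ k + 1) := by exact_mod_cast hm
  have hN' : (0 : ℝ) < (CS.cs G Finset.univ).card := by exact_mod_cast hN
  have hV' : (0 : ℝ) < Fintype.card V := by exact_mod_cast hV
  have hp : (0 : ℝ) < 2 ^ k + 1 := by positivity
  rw [ge_iff_le, le_div_iff₀ (by positivity)]
  have e : (1 : ℝ) - 1 / (2 ^ k + 1) = 2 ^ k / (2 ^ k + 1) := by field_simp; ring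
  rw [e]
  have e2 : (1 / 2 : ℝ) * (2 ^ k / (2 ^ k + 1)) *
      ((Fintype.card V : ℝ) * (CS.cs G Finset.univ).card) =
      ((Fintype.card V : ℝ) * 2 ^ k * (CS.cs G Finset.univ).card) / (2 * (2 ^ k + 1)) := by
    field_simp
  rw [e2, div_le_iff₀ (by positivity)]
  linarith
end

section
/- If G is a 2-connected graph of order n, then D(G) ≥ 2/5, i.e., the average size of a nonempty connected vertex set is at least 2n/5. -/
open Finset Filter

attribute [local instance] Classical.propDecidable

/-- Connectedness of the finite vertex set `U`, phrased via cuts. -/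
def Cn {V : Type*} (G : SimpleGraph V) (U : Finset V) : Prop :=
  U.Nonempty ∧ ∀ S : Set V, (∃ a ∈ U, a ∈ S) → (∃ b ∈ U, b ∉ S) →
    ∃ a ∈ U, ∃ b ∈ U, a ∈ S ∧ b ∉ S ∧ G.Adj a b

theorem cn_iff {V : Type*} (G : SimpleGraph V) (U : Finset V) :
    (G.induce (U : Set V)).Connected ↔ Cn G U := by
  constructor
  · intro h
    refine ⟨?_, ?_⟩
    · obtain ⟨x⟩ := h.nonempty
      exact ⟨x.1, x.2⟩
    · rintro S ⟨a, ha, haS⟩ ⟨b, hb, hbS⟩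
      obtain ⟨p⟩ := h.preconnected ⟨a, ha⟩ ⟨b, hb⟩
      obtain ⟨d, -, h1, h2⟩ := p.exists_boundary_dart {x | x.1 ∈ S} haS hbS
      exact ⟨d.fst.1, d.fst.2, d.snd.1, d.snd.2, h1, h2, d.adj⟩
  · rintro ⟨⟨u, hu⟩, h⟩
    have key : ∀ w : (U : Set V), (G.induce (U : Set V)).Reachable ⟨u, hu⟩ w := by
      intro w
      by_contra hw
      obtain ⟨a, ha, b, hb, ⟨ha', haS⟩, hbS, hab⟩ :=
        h {x | ∃ hx : x ∈ U, (G.induce (U : Set V)).Reachable ⟨u, hu⟩ ⟨x, hx⟩}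
          ⟨u, hu, hu, SimpleGraph.Reachable.refl _⟩ ⟨w.1, w.2, fun ⟨_, h'⟩ => hw h'⟩
      refine hbS ⟨hb, haS.trans ?_⟩
      exact SimpleGraph.Adj.reachable (by simpa using hab)
    have : Nonempty (U : Set V) := ⟨⟨u, hu⟩⟩
    exact SimpleGraph.Connected.mk fun a b => (key a).symm.trans (key b)

section
variable {V : Type*} {G : SimpleGraph V}

theorem cn_singleton (v : V) : Cn G {v} := by
  refine ⟨⟨v, by simp⟩, ?_⟩
  rintro S ⟨a, ha, haS⟩ ⟨b, hb, hbS⟩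
  simp at ha hb
  subst ha; subst hb
  exact absurd haS hbS

theorem Cn.insert_adj {A : Finset V} (hA : Cn G A) {x y : V} (hy : y ∈ A) (h : G.Adj y x) :
    Cn G (insert x A) := by
  refine ⟨⟨x, by simp⟩, ?_⟩
  rintro S ⟨a, ha, haS⟩ ⟨b, hb, hbS⟩
  by_cases hxS : x ∈ S <;> by_cases hyS : y ∈ S
  · have : ∃ b ∈ A, b ∉ S := by
      rcases Finset.mem_insert.1 hb with rfl | hb
      · exact absurd hxS hbS
      · exact ⟨b, hb, hbS⟩
    obtain ⟨p, hp, q, hq, h1⟩ := hA.2 S ⟨y, hy, hyS⟩ this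
    exact ⟨p, by simp [hp], q, by simp [hq], h1⟩
  · exact ⟨x, by simp, y, by simp [hy], hxS, hyS, h.symm⟩
  · exact ⟨y, by simp [hy], x, by simp, hyS, hxS, h⟩
  · have : ∃ a ∈ A, a ∈ S := by
      rcases Finset.mem_insert.1 ha with rfl | ha
      · exact absurd haS hxS
      · exact ⟨a, ha, haS⟩
    obtain ⟨p, hp, q, hq, h1⟩ := hA.2 S this ⟨y, hy, hyS⟩
    exact ⟨p, by simp [hp], q, by simp [hq], h1⟩

theorem Cn.union {A B : Finset V} (hA : Cn G A) (hB : Cn G B) {z : V} (hzA : z ∈ A)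
    (hzB : z ∈ B) : Cn G (A ∪ B) := by
  refine ⟨⟨z, by simp [hzA]⟩, ?_⟩
  rintro S ⟨a, ha, haS⟩ ⟨b, hb, hbS⟩
  have wA : (∃ a ∈ A, a ∈ S) → (∃ b ∈ A, b ∉ S) → 
      ∃ a ∈ A ∪ B, ∃ b ∈ A ∪ B, a ∈ S ∧ b ∉ S ∧ G.Adj a b := by
    intro h1 h2
    obtain ⟨p, hp, q, hq, h1⟩ := hA.2 S h1 h2
    exact ⟨p, by simp [hp], q, by simp [hq], h1⟩
  have wB : (∃ a ∈ B, a ∈ S) → (∃ b ∈ B, b ∉ S) → 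
      ∃ a ∈ A ∪ B, ∃ b ∈ A ∪ B, a ∈ S ∧ b ∉ S ∧ G.Adj a b := by
    intro h1 h2
    obtain ⟨p, hp, q, hq, h1⟩ := hB.2 S h1 h2
    exact ⟨p, by simp [hp], q, by simp [hq], h1⟩
  by_cases hzS : z ∈ S
  · rcases Finset.mem_union.1 hb with hb | hb
    · exact wA ⟨z, hzA, hzS⟩ ⟨b, hb, hbS⟩
    · exact wB ⟨z, hzB, hzS⟩ ⟨b, hb, hbS⟩
  · rcases Finset.mem_union.1 ha with ha | ha
    · exact wA ⟨a, ha, haS⟩ ⟨z, hzA, hzS⟩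
    · exact wB ⟨a, ha, haS⟩ ⟨z, hzB, hzS⟩

/-- a proper nonempty subset has an edge leaving it -/
theorem Cn.grow {H W : Finset V} (hW : Cn G W) (hH : H.Nonempty) (hHW : H ⊆ W) (hne : H ≠ W) :
    ∃ y ∈ H, ∃ x ∈ W, x ∉ H ∧ G.Adj y x := by
  obtain ⟨h, hh⟩ := hH
  have : ∃ b ∈ W, b ∉ H := by
    by_contra hcon
    push Not at hcon
    exact hne (Finset.Subset.antisymm hHW hcon)
  obtain ⟨b, hb, hbH⟩ := this
  obtain ⟨p, hp, q, hq, h1, h2, h3⟩ := hW.2 (H : Set V) ⟨h, hHW hh, hh⟩ ⟨b, hb, hbH⟩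
  exact ⟨p, h1, q, hq, h2, h3⟩

/-- removing a pendant vertex -/
theorem Cn.erase_leaf {U : Finset V} (hU : Cn G U) {v x : V}
    (hx : ∀ y ∈ U, G.Adj v y → y = x) (hne : ∃ b ∈ U, b ≠ v) (hvU : v ∈ U) :
    Cn G (U.erase v) ∧ x ∈ U.erase v := by
  obtain ⟨b, hb, hbv⟩ := hne
  have hxU : x ∈ U.erase v := by
    obtain ⟨p, hp, q, hq, h1, h2, h3⟩ := hU.2 {v} ⟨v, hvU, rfl⟩ ⟨b, hb, hbv⟩
    have : p = v := h1
    subst this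
    have := hx q hq h3
    subst this
    exact Finset.mem_erase.2 ⟨h2, hq⟩
  refine ⟨⟨⟨b, by simp [hb, hbv]⟩, ?_⟩, hxU⟩
  rintro S ⟨s, hs, hsS⟩ ⟨t, ht, htS⟩
  have hs' := Finset.mem_erase.1 hs
  have ht' := Finset.mem_erase.1 ht
  by_cases hxS : x ∈ S
  · obtain ⟨p, hp, q, hq, h1, h2, h3⟩ := hU.2 (S ∪ {v}) ⟨s, hs'.2, Or.inl hsS⟩
      ⟨t, ht'.2, by simp [htS, ht'.1]⟩
    simp only [Set.mem_union, Set.mem_singleton_iff, not_or] at h1 h2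
    by_cases hpv : p = v
    · subst hpv
      have := hx q hq h3
      subst this
      exact absurd hxS h2.1
    · exact ⟨p, Finset.mem_erase.2 ⟨hpv, hp⟩, q, Finset.mem_erase.2 ⟨h2.2, hq⟩,
        h1.resolve_right hpv, h2.1, h3⟩
  · obtain ⟨p, hp, q, hq, h1, h2, h3⟩ := hU.2 (S \ {v}) ⟨s, hs'.2, by simp [hsS, hs'.1]⟩
      ⟨t, ht'.2, by simp [htS]⟩
    simp only [Set.mem_sdiff, Set.mem_singleton_iff] at h1 h2
    by_cases hqv : q = v
    · subst hqv
      have := hx p hp h3.symm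
      subst this
      exact absurd h1.1 hxS
    · exact ⟨p, Finset.mem_erase.2 ⟨h1.2, hp⟩, q, Finset.mem_erase.2 ⟨hqv, hq⟩,
        h1.1, fun h => h2 ⟨h, hqv⟩, h3⟩

/-- connected sets between `H` and `W` -/
noncomputable def Fam (G : SimpleGraph V) (H W : Finset V) : Finset (Finset V) :=
  W.powerset.filter fun U => H ⊆ U ∧ Cn G U

theorem mem_Fam {H W U : Finset V} : U ∈ Fam G H W ↔ U ⊆ W ∧ H ⊆ U ∧ Cn G U := by
  simp [Fam]

theorem Fam_sum_split (H W : Finset V) (v : V) (f : Finset V → ℝ) :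
    ∑ U ∈ Fam G H W, f U
      = ∑ U ∈ Fam G (insert v H) W, f U + ∑ U ∈ Fam G H (W.erase v), f U := by
  have h1 : Fam G H W = Fam G (insert v H) W ∪ Fam G H (W.erase v) := by
    ext U
    simp only [Finset.mem_union, mem_Fam, Finset.subset_erase, Finset.insert_subset_iff]
    tauto
  rw [h1, Finset.sum_union]
  rw [Finset.disjoint_left]
  intro U h1 h2
  simp only [mem_Fam, Finset.subset_erase, Finset.insert_subset_iff] at h1 h2
  tauto

theorem Fam_card_split (H W : Finset V) (v : V) :
    ((Fam G H W).card : ℝ) = (Fam G (insert v H) W).card + (Fam G H (W.erase v)).card := by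
  have := Fam_sum_split (G := G) H W v (fun _ => 1)
  simpa using this

theorem Cn.chain {W : Finset V} (hW : Cn G W) {u : V} (hu : u ∈ W) (k : ℕ) (hk : 1 ≤ k) :
    k ≤ W.card → ∃ P, P ⊆ W ∧ u ∈ P ∧ Cn G P ∧ P.card = k := by
  induction k, hk using Nat.le_induction with
  | base => intro _; exact ⟨{u}, by simpa using hu, by simp, cn_singleton u, by simp⟩
  | succ k hk ih =>
    intro hkW
    obtain ⟨P, hPW, huP, hP, hPk⟩ := ih (by omega)
    obtain ⟨y, hy, x, hx, hxP, hyx⟩ := hW.grow hP.1 hPW (by rintro rfl; omega)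
    exact ⟨insert x P, Finset.insert_subset hx hPW, by simp [huP], hP.insert_adj hy hyx,
      by rw [Finset.card_insert_of_notMem hxP, hPk]⟩

theorem card_le_Fam {W : Finset V} (hW : Cn G W) {u : V} (hu : u ∈ W) :
    W.card ≤ (Fam G {u} W).card := by
  have h : Finset.Icc 1 W.card ⊆ (Fam G {u} W).image Finset.card := by
    intro k hk
    rw [Finset.mem_Icc] at hk
    obtain ⟨P, hPW, huP, hP, hPk⟩ := hW.chain hu k hk.1 hk.2
    exact Finset.mem_image.2 ⟨P, mem_Fam.2 ⟨hPW, by simpa using huP, hP⟩, hPk⟩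
  calc W.card = (Finset.Icc 1 W.card).card := by simp
    _ ≤ _ := Finset.card_le_card h
    _ ≤ _ := Finset.card_image_le

/-- `N_v ≤ n N_{uv}` -/
theorem Fam_pair {W : Finset V} (hW : Cn G W) {u v : V} (hu : u ∈ W) :
    (Fam G {v} W).card ≤ W.card * (Fam G {u, v} W).card := by
  have key : ∀ k, 1 ≤ k → k ≤ W.card → ∃ P, P ⊆ W ∧ u ∈ P ∧ Cn G P ∧ P.card = k ∧
      ((Fam G {v} W).filter fun U => ∃ z ∈ P, z ∈ U).card ≤ k * (Fam G {u, v} W).card := by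
    intro k hk
    induction k, hk using Nat.le_induction with
    | base =>
      intro _
      refine ⟨{u}, by simpa using hu, by simp, cn_singleton u, by simp, ?_⟩
      rw [one_mul]
      apply Finset.card_le_card
      intro U hU
      simp only [Finset.mem_filter, mem_Fam, Finset.mem_singleton, exists_eq_left,
        Finset.singleton_subset_iff, Finset.insert_subset_iff] at hU ⊢
      tauto
    | succ k hk ih =>
      intro hkW
      obtain ⟨P, hPW, huP, hP, hPk, hc⟩ := ih (by omega)
      obtain ⟨y, hy, x, hx, hxP, hyx⟩ := hW.grow hP.1 hPW (by rintro rfl; omega)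
      refine ⟨insert x P, Finset.insert_subset hx hPW, by simp [huP], hP.insert_adj hy hyx,
        by rw [Finset.card_insert_of_notMem hxP, hPk], ?_⟩
      have hsub : ((Fam G {v} W).filter fun U => ∃ z ∈ insert x P, z ∈ U) ⊆
          ((Fam G {v} W).filter fun U => ∃ z ∈ P, z ∈ U) ∪
          ((Fam G {v} W).filter fun U => x ∈ U ∧ ∀ z ∈ P, z ∉ U) := by
        intro U hU
        simp only [Finset.mem_filter, Finset.mem_union, Finset.mem_insert] at hU ⊢
        obtain ⟨hU, z, hz, hzU⟩ := hU
        by_cases h : ∃ z ∈ P, z ∈ U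
        · exact Or.inl ⟨hU, h⟩
        · push Not at h
          rcases hz with rfl | hz
          · exact Or.inr ⟨hU, hzU, h⟩
          · exact absurd hzU (h z hz)
      have hnew : ((Fam G {v} W).filter fun U => x ∈ U ∧ ∀ z ∈ P, z ∉ U).card ≤
          (Fam G {u, v} W).card := by
        apply Finset.card_le_card_of_injOn (fun U => U ∪ P)
        · intro U hU
          simp only [Finset.coe_filter, Set.mem_ofPred_eq, mem_Fam, 
            Finset.singleton_subset_iff] at hU
          obtain ⟨⟨hUW, hvU, hU⟩, hxU, -⟩ := hU
          simp only [Finset.mem_coe, mem_Fam, Finset.insert_subset_iff,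
            Finset.singleton_subset_iff, Finset.mem_union]
          refine ⟨Finset.union_subset hUW hPW, ⟨Or.inr huP, Or.inl hvU⟩, ?_⟩
          have := hU.union (hP.insert_adj hy hyx) hxU (by simp)
          convert this using 1
          ext t
          simp only [Finset.mem_union, Finset.mem_insert]
          constructor
          · tauto
          · rintro (h | rfl | h)
            · exact Or.inl h
            · exact Or.inl hxU
            · exact Or.inr h
        · intro U hU U' hU' h
          simp only [Finset.coe_filter, Set.mem_ofPred_eq] at hU hU'
          ext t
          have ht := Finset.ext_iff.1 h t
          simp only [Finset.mem_union] at ht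
          have h1 := hU.2.2 t
          have h2 := hU'.2.2 t
          tauto
      calc _ ≤ _ := Finset.card_le_card hsub
        _ ≤ _ := Finset.card_union_le _ _
        _ ≤ k * (Fam G {u, v} W).card + (Fam G {u, v} W).card := Nat.add_le_add hc (by convert hnew)
        _ = _ := by ring
  obtain ⟨P, hPW, huP, hP, hPk, hc⟩ := key W.card (Finset.card_pos.2 hW.1) le_rfl
  have hPW' : P = W := Finset.eq_of_subset_of_card_le hPW hPk.ge
  subst hPW'
  rwa [Finset.filter_true_of_mem] at hc
  intro U hU
  obtain ⟨h1, h2, h3⟩ := mem_Fam.1 hU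
  obtain ⟨z, hz⟩ := h3.1
  exact ⟨z, h1 hz, hz⟩

theorem union_logic {u d u' d' c : Prop} (ht : u ∨ d ↔ u' ∨ d') (h1 : u → c) (h2 : u' → c)
    (h3 : d → ¬ c) (h4 : d' → ¬ c) : (u ↔ u') ∧ (d ↔ d') := by
  tauto

set_option maxHeartbeats 1000000 in
/-- average of connected supersets of `H` -/
theorem local_avg (d : ℕ) : ∀ H W : Finset V, H ⊆ W → Cn G H → Cn G W → W.card = H.card + d →
    ((H.card : ℝ) + W.card) * (Fam G H W).card ≤ 2 * ∑ U ∈ Fam G H W, (U.card : ℝ) := by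
  induction d using Nat.strong_induction_on with
  | _ d ih =>
  intro H W hHW hH hW hd
  by_cases hne : H = W
  · subst hne
    have : Fam G H H = {H} := by
      ext U
      simp only [mem_Fam, Finset.mem_singleton]
      constructor
      · rintro ⟨h1, h2, -⟩
        exact Finset.Subset.antisymm h1 h2
      · rintro rfl
        exact ⟨subset_rfl, subset_rfl, hH⟩
    rw [this]
    simp
    linarith
  obtain ⟨y, hy, x, hx, hxH, hyx⟩ := hW.grow hH.1 hHW hne
  have hH' : Cn G (insert x H) := hH.insert_adj hy hyx
  have hcH' : (insert x H).card = H.card + 1 := Finset.card_insert_of_notMem hxH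
  have hH'W : insert x H ⊆ W := Finset.insert_subset hx hHW
  have hle := Finset.card_le_card hH'W
  have I1 := ih (d - 1) (by omega) (insert x H) W hH'W hH' hW (by omega)
  -- the component
  have hHF : H ∈ Fam G H (W.erase x) :=
    mem_Fam.2 ⟨Finset.subset_erase.2 ⟨hHW, hxH⟩, subset_rfl, hH⟩
  obtain ⟨C, hC, hCmax⟩ := Finset.exists_max_image (Fam G H (W.erase x)) Finset.card ⟨H, hHF⟩
  obtain ⟨hCW, hHC, hCc⟩ := mem_Fam.1 hC
  obtain ⟨h0, hh0⟩ := hH.1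
  have hmax : ∀ U ∈ Fam G H (W.erase x), U ⊆ C := by
    intro U hU
    obtain ⟨h1, h2, h3⟩ := mem_Fam.1 hU
    have := hCmax (C ∪ U) (mem_Fam.2 ⟨Finset.union_subset hCW h1,
      hHC.trans Finset.subset_union_left, hCc.union h3 (hHC hh0) (h2 hh0)⟩)
    have := Finset.eq_of_subset_of_card_le Finset.subset_union_left this
    rw [this]
    exact Finset.subset_union_right
  have hFC : Fam G H (W.erase x) = Fam G H C := by
    ext U
    constructor
    · intro hU
      obtain ⟨h1, h2, h3⟩ := mem_Fam.1 hU
      exact mem_Fam.2 ⟨hmax U hU, h2, h3⟩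
    · intro hU
      obtain ⟨h1, h2, h3⟩ := mem_Fam.1 hU
      exact mem_Fam.2 ⟨h1.trans hCW, h2, h3⟩
  have hCW' := Finset.subset_erase.1 hCW
  have hleC := Finset.card_le_card hHC
  have hltC : C.card < W.card :=
    Finset.card_lt_card ⟨hCW'.1, fun h => hCW'.2 (h hx)⟩
  have I2 := ih (C.card - H.card) (by omega) H C hHC hH hCc (by omega)
  -- the rest is connected
  have hxR : x ∈ W \ C := Finset.mem_sdiff.2 ⟨hx, hCW'.2⟩
  have hR : Cn G (W \ C) := by
    obtain ⟨D, hD, hDmax⟩ := Finset.exists_max_image (Fam G {x} (W \ C)) Finset.card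
      ⟨{x}, mem_Fam.2 ⟨by simpa using ⟨hx, hCW'.2⟩, subset_rfl, cn_singleton x⟩⟩
    obtain ⟨hDR, hxD, hDc⟩ := mem_Fam.1 hD
    have hxD : x ∈ D := by simpa using hxD
    by_cases hDe : D = W \ C
    · rwa [← hDe]
    exfalso
    have hCD : C ∪ D ≠ W := by
      intro h
      apply hDe
      apply Finset.Subset.antisymm hDR
      intro t ht
      rw [Finset.mem_sdiff, ← h, Finset.mem_union] at ht
      tauto
    have hCDW : C ∪ D ⊆ W := Finset.union_subset hCW'.1 (hDR.trans Finset.sdiff_subset)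
    obtain ⟨p, hp, q, hq, hqn, hpq⟩ := hW.grow (H := C ∪ D)
      ⟨x, by simp [hxD]⟩ hCDW hCD
    rw [Finset.mem_union, not_or] at hqn
    rcases Finset.mem_union.1 hp with hp | hp
    · have : insert q C ⊆ C := hmax _ (mem_Fam.2 ⟨Finset.insert_subset
        (Finset.mem_erase.2 ⟨by rintro rfl; exact hqn.2 hxD, hq⟩) hCW,
        hHC.trans (Finset.subset_insert _ _), hCc.insert_adj hp hpq⟩)
      exact hqn.1 (this (Finset.mem_insert_self _ _))
    · have := hDmax (insert q D) (mem_Fam.2 ⟨Finset.insert_subset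
        (Finset.mem_sdiff.2 ⟨hq, hqn.1⟩) hDR, by simp [hxD], hDc.insert_adj hp hpq⟩)
      rw [Finset.card_insert_of_notMem hqn.2] at this
      omega
  have hcnt : (Fam G H C ×ˢ Fam G {x} (W \ C)).card ≤ (Fam G (insert x H) W).card := by
    apply Finset.card_le_card_of_injOn (fun p => p.1 ∪ p.2)
    · rintro ⟨U, D⟩ hUD
      rw [Finset.mem_coe, Finset.mem_product] at hUD
      obtain ⟨⟨h1, h2, h3⟩, ⟨h4, h5, h6⟩⟩ := And.imp mem_Fam.1 mem_Fam.1 hUD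
      dsimp only at *
      have hxD : x ∈ D := by simpa using h5
      refine Finset.mem_coe.2 (mem_Fam.2 ⟨Finset.union_subset (h1.trans hCW'.1)
        (h4.trans Finset.sdiff_subset), Finset.insert_subset (by simp [hxD])
        (h2.trans Finset.subset_union_left), ?_⟩)
      have := (h3.insert_adj (h2 hy) hyx).union h6 (Finset.mem_insert_self _ _) hxD
      convert this using 1
      ext t
      simp only [Finset.mem_union, Finset.mem_insert]
      constructor
      · tauto
      · rintro ((rfl | h) | h)
        · exact Or.inr hxD
        · exact Or.inl h
        · exact Or.inr h
    · rintro ⟨U, D⟩ hUD ⟨U', D'⟩ hUD' h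
      rw [Finset.mem_coe, Finset.mem_product] at hUD hUD'
      obtain ⟨⟨h1, -, -⟩, ⟨h4, -, -⟩⟩ := And.imp mem_Fam.1 mem_Fam.1 hUD
      obtain ⟨⟨h1', -, -⟩, ⟨h4', -, -⟩⟩ := And.imp mem_Fam.1 mem_Fam.1 hUD'
      dsimp only at *
      have e : ∀ t, (t ∈ U ↔ t ∈ U') ∧ (t ∈ D ↔ t ∈ D') := by
        intro t
        have ht := Finset.ext_iff.1 h t
        have a1 := @h1 t
        have a2 := @h4 t
        have a3 := @h1' t
        have a4 := @h4' t
        simp only [Finset.mem_union, Finset.mem_sdiff] at ht a1 a2 a3 a4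
        exact union_logic ht a1 a3 (fun h => (a2 h).2) (fun h => (a4 h).2)
      rw [Prod.mk.injEq]
      exact ⟨Finset.ext fun t => (e t).1, Finset.ext fun t => (e t).2⟩
  rw [Finset.card_product] at hcnt
  have hge := card_le_Fam hR hxR
  rw [Finset.card_sdiff_of_subset hCW'.1] at hge
  have hfin : (Fam G H C).card * (W.card - C.card) ≤ (Fam G (insert x H) W).card :=
    (Nat.mul_le_mul_left _ hge).trans hcnt
  have hfin' : ((Fam G H C).card : ℝ) * ((W.card : ℝ) - C.card) ≤ (Fam G (insert x H) W).card := by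
    rw [← Nat.cast_sub hltC.le]
    exact_mod_cast hfin
  rw [Fam_sum_split H W x, Fam_card_split H W x, hFC]
  rw [hcH'] at I1
  push_cast at I1
  nlinarith

/-- non-cut vertices of `W` -/
def NonCut (G : SimpleGraph V) (W : Finset V) (v : V) : Prop :=
  v ∈ W ∧ (W = {v} ∨ Cn G (W.erase v))

theorem exists_nonCut {W : Finset V} (hW : Cn G W) : ∃ v, NonCut G W v := by
  obtain ⟨u, hu⟩ := hW.1
  have hpos := Finset.card_pos.2 hW.1
  by_cases h1 : W.card = 1
  · obtain ⟨v, rfl⟩ := Finset.card_eq_one.1 h1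
    exact ⟨v, by simp, Or.inl rfl⟩
  obtain ⟨P, hPW, -, hP, hPk⟩ := hW.chain hu (W.card - 1) (by omega) (by omega)
  have hc : (W \ P).card = 1 := by rw [Finset.card_sdiff_of_subset hPW]; omega
  obtain ⟨v, hv⟩ := Finset.card_eq_one.1 hc
  have hv' : v ∈ W \ P := by rw [hv]; simp
  rw [Finset.mem_sdiff] at hv'
  refine ⟨v, hv'.1, Or.inr ?_⟩
  have : P = W.erase v := by
    apply Finset.eq_of_subset_of_card_le (Finset.subset_erase.2 ⟨hPW, hv'.2⟩)
    rw [Finset.card_erase_of_mem hv'.1, hPk]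
  rwa [← this]

theorem Fam_one (v : V) (H : Finset V) (hH : H ⊆ {v}) : Fam G H {v} = {{v}} := by
  ext U
  rw [mem_Fam, Finset.mem_singleton]
  constructor
  · rintro ⟨h1, h2, h3⟩
    exact (Finset.Nonempty.subset_singleton_iff h3.1).1 h1
  · rintro rfl
    exact ⟨subset_rfl, hH, cn_singleton v⟩

theorem nonCut_bound (n : ℕ) : ∀ (W : Finset V) (v : V) (L : ℕ) (M : ℝ), W.card = n → Cn G W →
    NonCut G W v → ((Fam G {v} W).card : ℝ) + L ≤ M →
    (∀ w, NonCut G W w → w ≠ v →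
      ((Fam G {w} W).card : ℝ) + L * (Fam G {v, w} W).card ≤ M) →
    ((Fam G ∅ W).card : ℝ) + L * (Fam G {v} W).card + L * (L + 1) / 2 ≤ (n + L + 1) / 2 * M := by
  induction n with
  | zero =>
    intro W v L M h0 hW
    exact absurd h0 (Finset.card_pos.2 hW.1).ne'
  | succ n ih =>
  intro W v L M hn hW hv hMv hMw
  obtain ⟨hvW, hv⟩ := hv
  have hL : (0 : ℝ) ≤ L := Nat.cast_nonneg L
  rcases hv with hv | hW'
  · subst hv
    have : n = 0 := by simpa using hn.symm
    subst this
    rw [Fam_one v _ (by simp), Fam_one v _ (by simp)] at *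
    simp at hMv ⊢
    nlinarith
  set W' := W.erase v with hW'def
  have hn' : W'.card = n := by rw [hW'def, Finset.card_erase_of_mem hvW, hn]; rfl
  have hsplit0 := Fam_card_split (G := G) ∅ W v
  rw [insert_empty_eq, ← hW'def] at hsplit0
  have hsplit : ∀ w, ((Fam G {w} W).card : ℝ) = (Fam G {v, w} W).card + (Fam G {w} W').card :=
    fun w => Fam_card_split {w} W v
  have hvW' : v ∉ W' := Finset.notMem_erase v W
  have hW'W : W' ⊆ W := Finset.erase_subset _ _
  have hins : insert v W' = W := Finset.insert_erase hvW
  by_cases hcase : ∃ x, NonCut G W' x ∧ ∀ y ∈ W, G.Adj v y → y = x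
  · obtain ⟨x, hx, hleaf⟩ := hcase
    have hxW' : x ∈ W' := hx.1
    have hxv : x ≠ v := by rintro rfl; exact hvW' hxW'
    have hadj : G.Adj v x := by
      obtain ⟨p, hp, q, hq, hqn, hpq⟩ := hW.grow (H := {v}) ⟨v, by simp⟩ (by simpa using hvW)
        (by intro h; rw [← h] at hW'def; simp at hW'def; rw [hW'def] at hxW'; simp at hxW')
      have hp' : p = v := by simpa using hp
      subst hp'
      have := hleaf q hq hpq
      subst this
      exact hpq
    -- inserting `v`
    have hinj : ∀ H : Finset V, v ∉ H → 
        (Fam G (insert x H) W').card ≤ (Fam G (insert v H) W \ {{v}}).card := by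
      intro H hvH
      apply Finset.card_le_card_of_injOn (fun U => insert v U)
      · intro U hU
        obtain ⟨h1, h2, h3⟩ := mem_Fam.1 (Finset.mem_coe.1 hU)
        have hxU : x ∈ U := h2 (by simp)
        refine Finset.mem_coe.2 (Finset.mem_sdiff.2 ⟨mem_Fam.2 ⟨?_, ?_, ?_⟩, ?_⟩)
        · exact Finset.insert_subset hvW (h1.trans hW'W)
        · exact Finset.insert_subset_insert _ ((Finset.subset_insert _ _).trans h2)
        · exact h3.insert_adj hxU hadj.symm
        · intro h
          have h : insert v U = {v} := by simpa using h
          have : x ∈ insert v U := by simp [hxU]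
          rw [h] at this
          exact hxv (by simpa using this)
      · intro U hU U' hU' h
        have h1 : v ∉ U := fun h => hvW' ((mem_Fam.1 (Finset.mem_coe.1 hU)).1 h)
        have h2 : v ∉ U' := fun h => hvW' ((mem_Fam.1 (Finset.mem_coe.1 hU')).1 h)
        have : (insert v U).erase v = (insert v U').erase v := congrArg (fun s => s.erase v) h
        rwa [Finset.erase_insert h1, Finset.erase_insert h2] at this
    have hvmem : ({v} : Finset V) ∈ Fam G {v} W :=
      mem_Fam.2 ⟨by simpa using hvW, subset_rfl, cn_singleton v⟩
    have hge : (Fam G {x} W').card + 1 ≤ (Fam G {v} W).card := by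
      have h := hinj ∅ (by simp)
      simp only [insert_empty_eq] at h
      rw [Finset.card_sdiff_of_subset (by simpa using hvmem), Finset.card_singleton] at h
      have := Finset.card_pos.2 ⟨_, hvmem⟩
      omega
    have hle : (Fam G {v} W).card ≤ (Fam G {x} W').card + 1 := by
      have h : (Fam G {v} W \ {{v}}).card ≤ (Fam G {x} W').card := by
        apply Finset.card_le_card_of_injOn (fun U => U.erase v)
        · intro U hU
          obtain ⟨hU1, hU2⟩ := Finset.mem_sdiff.1 (Finset.mem_coe.1 hU)
          obtain ⟨h1, h2, h3⟩ := mem_Fam.1 hU1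
          have hvU : v ∈ U := by simpa using h2
          have hb : ∃ b ∈ U, b ≠ v := by
            by_contra hcon
            push Not at hcon
            apply hU2
            rw [Finset.mem_singleton]
            exact Finset.eq_singleton_iff_unique_mem.2 ⟨hvU, hcon⟩
          have := h3.erase_leaf (x := x) (fun y hy => hleaf y (h1 hy)) hb hvU
          exact Finset.mem_coe.2 (mem_Fam.2 ⟨Finset.erase_subset_erase _ h1,
            by simpa using this.2, this.1⟩)
        · intro U hU U' hU' h
          have h1 : v ∈ U := by
            simpa using (mem_Fam.1 (Finset.mem_sdiff.1 (Finset.mem_coe.1 hU)).1).2.1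
          have h2 : v ∈ U' := by
            simpa using (mem_Fam.1 (Finset.mem_sdiff.1 (Finset.mem_coe.1 hU')).1).2.1
          have : insert v (U.erase v) = insert v (U'.erase v) :=
            congrArg (fun s => insert v s) h
          rwa [Finset.insert_erase h1, Finset.insert_erase h2] at this
      rw [Finset.card_sdiff_of_subset (by simpa using hvmem), Finset.card_singleton] at h
      omega
    have heq : ((Fam G {v} W).card : ℝ) = (Fam G {x} W').card + 1 := by
      exact_mod_cast le_antisymm hle hge
    have hmain := ih W' x (L + 1) M hn' hW' hx (by push_cast; linarith) ?_
    · push_cast at hmain ⊢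
      rw [hsplit0, heq]
      nlinarith
    · intro w hw hwx
      have hwW' : w ∈ W' := hw.1
      have hwv : w ≠ v := by rintro rfl; exact hvW' hwW'
      have hnc : NonCut G W w := by
        refine ⟨hW'W hwW', Or.inr ?_⟩
        have hcn : Cn G (W'.erase w) := by
          rcases hw.2 with h | h
          · rw [h] at hxW'
            exact absurd (by simpa using hxW') hwx.symm
          · exact h
        have := hcn.insert_adj (y := x) (Finset.mem_erase.2 ⟨hwx.symm, hxW'⟩) hadj.symm
        rwa [← Finset.erase_insert_of_ne hwv.symm, hins] at this
      have h1 := hMw w hnc hwv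
      have h2 : (Fam G {x, w} W').card ≤ (Fam G {v, w} W).card :=
        (hinj {w} (by simpa using hwv.symm)).trans (Finset.card_le_card Finset.sdiff_subset)
      have h2' : ((Fam G {x, w} W').card : ℝ) ≤ (Fam G {v, w} W).card := by exact_mod_cast h2
      have h3 := hsplit w
      push_cast
      nlinarith
  · push Not at hcase
    obtain ⟨x, hx⟩ := exists_nonCut hW'
    have hnpos : (0 : ℝ) < (n : ℝ) + 1 := by positivity
    have hbd : ∀ w, NonCut G W' w → 
        ((Fam G {w} W').card : ℝ) ≤ M - (L + 1) * (Fam G {v} W).card / (n + 1) := by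
      intro w hw
      have hwW' : w ∈ W' := hw.1
      have hwv : w ≠ v := by rintro rfl; exact hvW' hwW'
      obtain ⟨y, hyW, hvy, hyw⟩ := hcase w hw
      have hyv : y ≠ v := by rintro rfl; exact G.loopless.irrefl _ hvy
      have hyW' : y ∈ W' := Finset.mem_erase.2 ⟨hyv, hyW⟩
      have hnc : NonCut G W w := by
        refine ⟨hW'W hwW', Or.inr ?_⟩
        have hcn : Cn G (W'.erase w) := by
          rcases hw.2 with h | h
          · rw [h] at hyW'
            exact absurd (by simpa using hyW') hyw
          · exact h
        have := hcn.insert_adj (y := y) (Finset.mem_erase.2 ⟨hyw, hyW'⟩) hvy.symm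
        rwa [← Finset.erase_insert_of_ne hwv.symm, hins] at this
      have h1 := hMw w hnc hwv
      have h2 := Fam_pair hW (u := w) (v := v) (hW'W hwW')
      rw [Finset.pair_comm, hn] at h2
      have h2' : ((Fam G {v} W).card : ℝ) ≤ (n + 1) * (Fam G {v, w} W).card := by
        exact_mod_cast h2
      have h3 := hsplit w
      have h4 : ((Fam G {v} W).card : ℝ) / (n + 1) ≤ (Fam G {v, w} W).card := by
        rw [div_le_iff₀ hnpos]; linarith
      have h5 : (L + 1) * (Fam G {v} W).card / ((n : ℝ) + 1)
          ≤ (L + 1) * ((Fam G {v, w} W).card : ℝ) := by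
        rw [mul_div_assoc]
        exact mul_le_mul_of_nonneg_left h4 (by positivity)
      nlinarith
    have hmain := ih W' x 0 _ hn' hW' hx (by simpa using hbd x hx)
      (fun w hw _ => by simpa using hbd w hw)
    simp only [Nat.cast_zero, zero_mul, add_zero, zero_div] at hmain
    rw [hsplit0]
    have e : ((n : ℝ) + 1) / 2 * (M - (L + 1) * (Fam G {v} W).card / (n + 1))
        = (n + 1) / 2 * M - (L + 1) * (Fam G {v} W).card / 2 := by
      field_simp
    rw [e] at hmain
    push_cast
    nlinarith

theorem avg_conn (n : ℕ) : ∀ W : Finset V, W.card = n → Cn G W →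
    ((n : ℝ) + 2) / 3 * (Fam G ∅ W).card ≤ ∑ U ∈ Fam G ∅ W, (U.card : ℝ) := by
  induction n with
  | zero =>
    intro W h0 hW
    exact absurd h0 (Finset.card_pos.2 hW.1).ne'
  | succ n ih =>
  intro W hn hW
  obtain ⟨x, hx⟩ := exists_nonCut hW
  obtain ⟨v, hv, hmax⟩ := Finset.exists_max_image (W.filter (NonCut G W))
    (fun w => (Fam G {w} W).card) ⟨x, Finset.mem_filter.2 ⟨hx.1, hx⟩⟩
  have hvN := (Finset.mem_filter.1 hv).2
  have hb := nonCut_bound (n + 1) W v 0 (Fam G {v} W).card hn hW hvN (by simp) (by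
    intro w hw _
    have := hmax w (Finset.mem_filter.2 ⟨hw.1, hw⟩)
    simpa using this)
  simp only [Nat.cast_zero, zero_mul, add_zero, zero_div] at hb
  obtain ⟨hvW, h | h⟩ := hvN
  · subst h
    have : n = 0 := by simpa using hn.symm
    subst this
    rw [Fam_one v _ (by simp)]
    norm_num
  · have hn' : (W.erase v).card = n := by rw [Finset.card_erase_of_mem hvW, hn]; rfl
    have h1 := ih _ hn' h
    have h2 := local_avg (G := G) n {v} W (by simpa using hvW) (cn_singleton v) hW
      (by simp [hn]; ring)
    rw [hn] at h2
    have hs := Fam_card_split (G := G) ∅ W v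
    rw [Fam_sum_split ∅ W v]
    rw [insert_empty_eq] at hs ⊢
    push_cast [Finset.card_singleton] at h2 hb ⊢
    nlinarith

end

theorem stmt_14 {V : Type*} [Fintype V] (G : SimpleGraph V) (hG : KConnected 2 G) :
    (∑ U ∈ connSets G, (U.card : ℝ)) / ((Fintype.card V : ℝ) * (connSets G).card) ≥ 2 / 5 ∧
    (∑ U ∈ connSets G, (U.card : ℝ)) / (connSets G).card ≥ 2 * (Fintype.card V : ℝ) / 5 := by
  have hF : connSets G = Fam G ∅ Finset.univ := by
    ext U
    rw [mem_Fam]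
    simp only [connSets, Finset.mem_filter, Finset.mem_univ, true_and, cn_iff]
    constructor
    · rintro ⟨-, h⟩
      exact ⟨Finset.subset_univ _, Finset.empty_subset _, h⟩
    · rintro ⟨-, -, h⟩
      exact ⟨h.1, h⟩
  obtain ⟨hcard, hconn⟩ := hG
  have hU : Cn G (Finset.univ : Finset V) := by
    have := hconn ∅ (by simp)
    rw [cn_iff] at this
    simpa using this
  rw [hF]
  set n := Fintype.card V with hn
  have hnpos : (0 : ℝ) < n := by
    have : 0 < n := by omega
    exact_mod_cast this
  obtain ⟨v0, hv0⟩ := hU.1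
  obtain ⟨v, -, hmax⟩ := Finset.exists_max_image (Finset.univ : Finset V)
    (fun w => (Fam G {w} Finset.univ).card) ⟨v0, hv0⟩
  have hE : Cn G ((Finset.univ : Finset V).erase v) := by
    have := hconn {v} (by simp)
    rw [cn_iff, Finset.compl_singleton] at this
    convert this
  -- double counting
  have hdc : ∑ U ∈ Fam G ∅ Finset.univ, (U.card : ℝ)
      = ∑ w : V, ((Fam G {w} Finset.univ).card : ℝ) := by
    have h1 : ∀ U : Finset V, (U.card : ℝ) = ∑ w : V, if w ∈ U then (1 : ℝ) else 0 := by
      intro U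
      simp
    rw [Finset.sum_congr rfl fun U _ => h1 U, Finset.sum_comm]
    apply Finset.sum_congr rfl
    intro w _
    rw [← Finset.sum_filter, Finset.sum_const, nsmul_eq_mul, mul_one]
    congr 2
    ext U
    simp only [Finset.mem_filter, mem_Fam, Finset.singleton_subset_iff, Finset.empty_subset]
    tauto
  have hle : ∑ U ∈ Fam G ∅ Finset.univ, (U.card : ℝ) ≤ n * (Fam G {v} Finset.univ).card := by
    rw [hdc]
    calc _ ≤ ∑ w : V, ((Fam G {v} Finset.univ).card : ℝ) :=
          Finset.sum_le_sum fun w hw => by exact_mod_cast hmax w hw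
      _ = _ := by simp [hn]
  have h1 := avg_conn (G := G) (n - 1) _
    (by rw [Finset.card_erase_of_mem (Finset.mem_univ v), Finset.card_univ]) hE
  have h2 := local_avg (G := G) (n - 1) {v} Finset.univ (by simp) (cn_singleton v) hU
    (by rw [Finset.card_univ, Finset.card_singleton]; omega)
  rw [Nat.cast_sub (by omega)] at h1
  rw [Finset.card_univ, ← hn, Finset.card_singleton] at h2
  have hs := Fam_card_split (G := G) ∅ Finset.univ v
  have hss := Fam_sum_split (G := G) ∅ Finset.univ v (fun U => (U.card : ℝ))
  rw [insert_empty_eq] at hs hss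
  push_cast at h1 h2
  have hNpos : (0 : ℝ) < (Fam G ∅ (Finset.univ : Finset V)).card := by
    have : 0 < (Fam G ∅ (Finset.univ : Finset V)).card :=
      Finset.card_pos.2 ⟨Finset.univ, mem_Fam.2 ⟨subset_rfl, Finset.empty_subset _, hU⟩⟩
    exact_mod_cast this
  set S := ∑ U ∈ Fam G ∅ Finset.univ, (U.card : ℝ) with hS
  set N : ℝ := ((Fam G ∅ (Finset.univ : Finset V)).card : ℝ) with hN
  set a : ℝ := ((Fam G {v} (Finset.univ : Finset V)).card : ℝ) with ha
  have ha0 : 0 ≤ a := Nat.cast_nonneg _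
  have hbb : ((Fam G ∅ (Finset.univ.erase v)).card : ℝ) = N - a := by linarith
  rw [hbb] at h1
  have hmain : 2 * n * N / 5 ≤ S := by
    -- S ≥ (n+1)/3 N + (n+1)/6 a
    have h3 : ((n : ℝ) + 1) / 3 * N + (n + 1) / 6 * a ≤ S := by
      rw [hss]; nlinarith
    have h4 : (n : ℝ) / 3 * N + S / 6 ≤ S := by nlinarith
    linarith
  constructor
  · rw [ge_iff_le, le_div_iff₀ (mul_pos hnpos hNpos)]
    linarith
  · rw [ge_iff_le, le_div_iff₀ hNpos]
    linarith
end
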